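/- arXiv:2307.06835 — 5 statements merged into one kernel-verified Lean document; each statement's English description precedes it below -/
import Mathlib

section
/- Fix M, N, s with 0 ≤ s ≤ M and N > 4M−3. Then there is a nonempty Zariski-open subset of the parameter space of pairs of s-overlapping N-element frames on ℂ^M such that for every pair (U,V) = ((α_1,…,α_N),(β_1,…,β_N)) in this subset, there is no pair (A,B) of distinct rank-one M×M Hermitian matrices satisfying α_n* A α_n = β_n* B β_n for all n = 1,…,N. -/
/-!
STATEMENT 8: For 0 ≤ s ≤ M and N > 4M−3, a generic pair of s-overlapping N-element
frames on ℂ^M (generic in the real Zariski topology on the parameter space of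
s-overlapping pairs) admits no pair (A,B) of distinct rank-one Hermitian matrices
with αₙ* A αₙ = βₙ* B βₙ for all n.
-/

open Matrix

noncomputable section

/-- Realification of a pair of complex M×N matrices: real and imaginary parts of all
entries (these are the real coordinates (U,U′,V,V′) on the real points of Λ_s). -/
def realizePair {M N : ℕ}
    (p : Matrix (Fin M) (Fin N) ℂ × Matrix (Fin M) (Fin N) ℂ) :
    ((Fin M × Fin N) × Fin 2) ⊕ ((Fin M × Fin N) × Fin 2) → ℝ :=
  Sum.elim
    (fun a => if a.2 = 0 then (p.1 a.1.1 a.1.2).re else (p.1 a.1.1 a.1.2).im)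
    (fun a => if a.2 = 0 then (p.2 a.1.1 a.1.2).re else (p.2 a.1.1 a.1.2).im)

/-- A real Zariski-open subset of the space of pairs of complex M×N matrices:
the complement of the common zero locus of a family of real polynomials in the real and
imaginary parts of the entries. -/
def IsRealZariskiOpenPairC {M N : ℕ}
    (U : Set (Matrix (Fin M) (Fin N) ℂ × Matrix (Fin M) (Fin N) ℂ)) : Prop :=
  ∃ I : Set (MvPolynomial (((Fin M × Fin N) × Fin 2) ⊕ ((Fin M × Fin N) × Fin 2)) ℝ),
    U = {p | ∃ q ∈ I, MvPolynomial.eval (realizePair p) q ≠ 0}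

/-- Row space of a complex matrix (= image of the associated frame map). -/
def rowSpanC {m n : ℕ} (B : Matrix (Fin m) (Fin n) ℂ) : Submodule ℂ (Fin n → ℂ) :=
  Submodule.span ℂ (Set.range fun i => B i)

/-- The parameter space of pairs of s-overlapping N-element frames on ℂ^M: both frame
matrices have full rank M, their first s rows agree, and the intersection of the images
of the frame maps (= row spaces) has dimension exactly s. -/
def IsSOverlappingPair {M N : ℕ} (s : ℕ)
    (p : Matrix (Fin M) (Fin N) ℂ × Matrix (Fin M) (Fin N) ℂ) : Prop :=
  p.1.rank = M ∧ p.2.rank = M ∧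
  (∀ i : Fin M, (i : ℕ) < s → p.1 i = p.2 i) ∧
  Module.finrank ℂ ↥(rowSpanC p.1 ⊓ rowSpanC p.2) = s

namespace GenOverlap

/-- A real function which is given by a polynomial. -/
def RPoly {P : Type} (f : (P → ℝ) → ℝ) : Prop :=
  ∃ q : MvPolynomial P ℝ, ∀ t, MvPolynomial.eval t q = f t

/-- A complex function whose real and imaginary parts are polynomials. -/
def CPoly {P : Type} (f : (P → ℝ) → ℂ) : Prop :=
  RPoly (fun t => (f t).re) ∧ RPoly (fun t => (f t).im)

section
variable {P : Type}

lemma RPoly.add {f g : (P → ℝ) → ℝ} (hf : RPoly f) (hg : RPoly g) :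
    RPoly (fun t => f t + g t) := by
  obtain ⟨p, hp⟩ := hf
  obtain ⟨q, hq⟩ := hg
  exact ⟨p + q, fun t => by simp [hp, hq]⟩

lemma RPoly.sub {f g : (P → ℝ) → ℝ} (hf : RPoly f) (hg : RPoly g) :
    RPoly (fun t => f t - g t) := by
  obtain ⟨p, hp⟩ := hf
  obtain ⟨q, hq⟩ := hg
  exact ⟨p - q, fun t => by simp [hp, hq]⟩

lemma RPoly.mul {f g : (P → ℝ) → ℝ} (hf : RPoly f) (hg : RPoly g) :
    RPoly (fun t => f t * g t) := by
  obtain ⟨p, hp⟩ := hf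
  obtain ⟨q, hq⟩ := hg
  exact ⟨p * q, fun t => by simp [hp, hq]⟩

lemma RPoly.neg {f : (P → ℝ) → ℝ} (hf : RPoly f) : RPoly (fun t => - f t) := by
  obtain ⟨p, hp⟩ := hf
  exact ⟨-p, fun t => by simp [hp]⟩

lemma RPoly.const (c : ℝ) : RPoly (fun _ : P → ℝ => c) := ⟨MvPolynomial.C c, fun t => by simp⟩

lemma RPoly.coord (i : P) : RPoly (fun t : P → ℝ => t i) := ⟨MvPolynomial.X i, fun t => by simp⟩

lemma CPoly.mk {f g : (P → ℝ) → ℝ} (hf : RPoly f) (hg : RPoly g) :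
    CPoly (fun t => (⟨f t, g t⟩ : ℂ)) := ⟨hf, hg⟩

lemma CPoly.const (c : ℂ) : CPoly (fun _ : P → ℝ => c) := ⟨RPoly.const _, RPoly.const _⟩

lemma CPoly.add {f g : (P → ℝ) → ℂ} (hf : CPoly f) (hg : CPoly g) :
    CPoly (fun t => f t + g t) := ⟨hf.1.add hg.1, hf.2.add hg.2⟩

lemma CPoly.sub {f g : (P → ℝ) → ℂ} (hf : CPoly f) (hg : CPoly g) :
    CPoly (fun t => f t - g t) := ⟨hf.1.sub hg.1, hf.2.sub hg.2⟩

lemma CPoly.neg {f : (P → ℝ) → ℂ} (hf : CPoly f) :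
    CPoly (fun t => - f t) := ⟨hf.1.neg, hf.2.neg⟩

lemma CPoly.conj {f : (P → ℝ) → ℂ} (hf : CPoly f) :
    CPoly (fun t => star (f t)) := ⟨hf.1, hf.2.neg⟩

lemma CPoly.mul {f g : (P → ℝ) → ℂ} (hf : CPoly f) (hg : CPoly g) :
    CPoly (fun t => f t * g t) := by
  constructor
  · simpa only [Complex.mul_re] using (hf.1.mul hg.1).sub (hf.2.mul hg.2)
  · simpa only [Complex.mul_im] using (hf.1.mul hg.2).add (hf.2.mul hg.1)

lemma CPoly.sum {ι : Type*} (S : Finset ι) {f : ι → (P → ℝ) → ℂ} (hf : ∀ i, CPoly (f i)) :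
    CPoly (fun t => ∑ i ∈ S, f i t) := by
  classical
  induction S using Finset.induction_on with
  | empty => simpa using CPoly.const 0
  | insert a S ha ih => simpa only [Finset.sum_insert ha] using (hf a).add ih

/-- Fewer parameters than coordinates: the image lies in a hypersurface. -/
lemma exists_hypersurface [Fintype P] {C : Type} [Fintype C]
    (hcard : Fintype.card P < Fintype.card C) (F : C → (P → ℝ) → ℝ) (hF : ∀ c, RPoly (F c)) :
    ∃ Q : MvPolynomial C ℝ, Q ≠ 0 ∧ ∀ t, MvPolynomial.eval (fun c => F c t) Q = 0 := by
  choose f hf using hF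
  have hdep : ¬ AlgebraicIndependent ℝ f := by
    intro hi
    have h1 := hi.lift_cardinalMk_le_trdeg
    rw [MvPolynomial.trdeg_of_isDomain] at h1
    simp only [Cardinal.mk_fintype, Cardinal.lift_natCast, Nat.cast_le] at h1
    omega
  rw [algebraicIndependent_iff] at hdep
  push Not at hdep
  obtain ⟨Q, hQ, hne⟩ := hdep
  refine ⟨Q, hne, fun t => ?_⟩
  have h2 : MvPolynomial.eval t (MvPolynomial.aeval f Q) = 0 := by rw [hQ]; simp
  have h3 : ((MvPolynomial.aeval t : MvPolynomial P ℝ →ₐ[ℝ] ℝ).comp (MvPolynomial.aeval f)) =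
      MvPolynomial.aeval (fun c => F c t) := by
    apply MvPolynomial.algHom_ext
    intro c
    simp only [AlgHom.comp_apply, MvPolynomial.aeval_X]
    rw [MvPolynomial.aeval_eq_eval]
    exact hf c t
  have h4 := DFunLike.congr_fun h3 Q
  simp only [AlgHom.comp_apply, MvPolynomial.aeval_eq_eval] at h4
  rw [← h4]
  exact h2

end

/-- Complex coordinates of a column of an `s`-overlapping pair. -/
abbrev Idx (M s : ℕ) := Fin M ⊕ {k : Fin M // s ≤ (k : ℕ)}

/-- Real coordinates of the space of `s`-overlapping pairs. -/
abbrev Coord (M N s : ℕ) := (Fin N × Idx M s) × Fin 2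

/-- Parameters of a stratum of the incidence variety. -/
abbrev Par (M N s : ℕ) (i j : Fin M) (κ : Fin N → Idx M s) :=
  (({k : Fin M // k ≠ i} × Fin 2) ⊕ ({k : Fin M // k ≠ j} × Fin 2)) ⊕
    ((Unit ⊕ Fin N) ⊕ ((Σ n : Fin N, {k : Idx M s // k ≠ κ n}) × Fin 2))

lemma card_Idx (M s : ℕ) (hs : s ≤ M) : Fintype.card (Idx M s) = M + (M - s) := by
  rw [Fintype.card_sum, Fintype.card_fin, Fintype.card_subtype]
  congr 1
  have : (Finset.univ.filter fun k : Fin M => s ≤ (k : ℕ)) = 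
      (Finset.univ.filter fun k : Fin M => ¬ (k : ℕ) < s) := by simp
  have h1 := Finset.card_filter_add_card_filter_not (s := (Finset.univ : Finset (Fin M))) 
    (fun k : Fin M => (k : ℕ) < s)
  rw [← this, Fin.card_filter_val_lt, Finset.card_univ, Fintype.card_fin] at h1
  omega

lemma card_lt (M N s : ℕ) (i j : Fin M) (κ : Fin N → Idx M s)
    (h : 4 * M - 3 < N) :
    Fintype.card (Par M N s i j κ) < Fintype.card (Coord M N s) := by
  have hM : 0 < M := i.pos
  have hD : 0 < Fintype.card (Idx M s) := Fintype.card_pos_iff.mpr ⟨Sum.inl i⟩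
  have hsub : ∀ n, Fintype.card {k : Idx M s // k ≠ κ n} = Fintype.card (Idx M s) - 1 := by
    intro n
    rw [Fintype.card_subtype_compl, Fintype.card_subtype_eq]
  have hi : ∀ i : Fin M, Fintype.card {k : Fin M // k ≠ i} = M - 1 := by
    intro n
    rw [Fintype.card_subtype_compl, Fintype.card_subtype_eq, Fintype.card_fin]
  have e1 : Fintype.card (Par M N s i j κ) =
      ((M-1) * 2 + (M-1)*2) + ((1 + N) + (N * (Fintype.card (Idx M s) - 1)) * 2) := by
    rw [Fintype.card_sum, Fintype.card_sum, Fintype.card_sum, Fintype.card_sum, Fintype.card_prod,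
      Fintype.card_prod, Fintype.card_prod, Fintype.card_sigma, hi, hi, Finset.sum_congr rfl (fun n _ => hsub n)]
    simp
  have e2 : Fintype.card (Coord M N s) = (N * Fintype.card (Idx M s)) * 2 := by
    rw [Fintype.card_prod, Fintype.card_prod]; simp
  rw [e1, e2]
  obtain ⟨d, hd⟩ := Nat.exists_eq_add_of_lt hD
  rw [hd]
  simp only [zero_add, Nat.add_sub_cancel, Nat.mul_add]
  omega

section param
variable {M N s : ℕ} {i j : Fin M} {κ : Fin N → Idx M s}

def xP (t : Par M N s i j κ → ℝ) (k : Fin M) : ℂ :=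
  if h : k = i then 1 else
    ⟨t (Sum.inl (Sum.inl (⟨k, h⟩, 0))), t (Sum.inl (Sum.inl (⟨k, h⟩, 1)))⟩

def yP (t : Par M N s i j κ → ℝ) (k : Fin M) : ℂ :=
  if h : k = j then ⟨t (Sum.inr (Sum.inl (Sum.inl ()))), 0⟩ else
    ⟨t (Sum.inl (Sum.inr (⟨k, h⟩, 0))), t (Sum.inl (Sum.inr (⟨k, h⟩, 1)))⟩

def zP (e : Fin N → Bool) (t : Par M N s i j κ → ℝ) (n : Fin N) : ℂ :=
  ⟨if e n then 1 else 0, t (Sum.inr (Sum.inl (Sum.inr n)))⟩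

/-- Coefficients of the linear form cutting out the column. -/
def coefL (s : ℕ) (x y : Fin M → ℂ) (z : ℂ) : Idx M s → ℂ
  | Sum.inl k => if (k : ℕ) < s then star z * star (x k) - z * star (y k) else star z * star (x k)
  | Sum.inr k => - (z * star (y k.1))

def gP (t : Par M N s i j κ → ℝ) (n : Fin N) (k : Idx M s) : ℂ :=
  if h : k = κ n then 0 else
    ⟨t (Sum.inr (Sum.inr (⟨n, ⟨k, h⟩⟩, 0))), t (Sum.inr (Sum.inr (⟨n, ⟨k, h⟩⟩, 1)))⟩

/-- The parametrization of a stratum. -/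
def outP (e : Fin N → Bool) (t : Par M N s i j κ → ℝ) (n : Fin N) (k : Idx M s) : ℂ :=
  if k = κ n then - ∑ k', coefL s (xP t) (yP t) (zP e t n) k' * gP t n k'
  else coefL s (xP t) (yP t) (zP e t n) (κ n) * gP t n k

lemma xP_poly (k : Fin M) : CPoly (fun t : Par M N s i j κ → ℝ => xP t k) := by
  unfold xP
  split_ifs
  · exact CPoly.const _
  · exact CPoly.mk (RPoly.coord _) (RPoly.coord _)

lemma yP_poly (k : Fin M) : CPoly (fun t : Par M N s i j κ → ℝ => yP t k) := by
  unfold yP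
  split_ifs
  · exact CPoly.mk (RPoly.coord _) (RPoly.const _)
  · exact CPoly.mk (RPoly.coord _) (RPoly.coord _)

lemma zP_poly (e : Fin N → Bool) (n : Fin N) :
    CPoly (fun t : Par M N s i j κ → ℝ => zP e t n) :=
  CPoly.mk (RPoly.const _) (RPoly.coord _)

lemma gP_poly (n : Fin N) (k : Idx M s) : CPoly (fun t : Par M N s i j κ → ℝ => gP t n k) := by
  unfold gP
  split_ifs
  · exact CPoly.const _
  · exact CPoly.mk (RPoly.coord _) (RPoly.coord _)

lemma coefL_poly (e : Fin N → Bool) (n : Fin N) (k : Idx M s) :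
    CPoly (fun t : Par M N s i j κ → ℝ => coefL s (xP t) (yP t) (zP e t n) k) := by
  rcases k with k | k
  · simp only [coefL]
    split_ifs
    · exact ((zP_poly e n).conj.mul (xP_poly k).conj).sub ((zP_poly e n).mul (yP_poly k).conj)
    · exact (zP_poly e n).conj.mul (xP_poly k).conj
  · exact ((zP_poly e n).mul (yP_poly k.1).conj).neg

lemma outP_poly (e : Fin N → Bool) (n : Fin N) (k : Idx M s) :
    CPoly (fun t : Par M N s i j κ → ℝ => outP e t n k) := by
  unfold outP
  split_ifs
  · exact (CPoly.sum _ fun k' => (coefL_poly e n k').mul (gP_poly n k')).neg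
  · exact (coefL_poly e n _).mul (gP_poly n k)

end param

/-- real coordinates of a complex array -/
def toReal {M N s : ℕ} (γ : Fin N → Idx M s → ℂ) (c : Coord M N s) : ℝ :=
  if c.2 = 0 then (γ c.1.1 c.1.2).re else (γ c.1.1 c.1.2).im

lemma exists_stratum_poly {M N s : ℕ} (h : 4 * M - 3 < N) (i j : Fin M) (κ : Fin N → Idx M s)
    (e : Fin N → Bool) :
    ∃ Q : MvPolynomial (Coord M N s) ℝ, Q ≠ 0 ∧
      ∀ t : Par M N s i j κ → ℝ, MvPolynomial.eval (toReal (outP e t)) Q = 0 := by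
  refine exists_hypersurface (card_lt M N s i j κ h) (fun c t => toReal (outP e t) c) ?_
  intro c
  unfold toReal
  split_ifs
  · exact (outP_poly e _ _).1
  · exact (outP_poly e _ _).2

/-- One polynomial vanishing on all strata. -/
lemma exists_poly {M N : ℕ} (s : ℕ) (h : 4 * M - 3 < N) :
    ∃ Q : MvPolynomial (Coord M N s) ℝ, Q ≠ 0 ∧
      ∀ (i j : Fin M) (κ : Fin N → Idx M s) (e : Fin N → Bool) (t : Par M N s i j κ → ℝ),
        MvPolynomial.eval (toReal (outP e t)) Q = 0 := by
  classical
  choose Q hQ hQ0 using fun σ : Fin M × Fin M × (Fin N → Idx M s) × (Fin N → Bool) =>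
    exists_stratum_poly h σ.1 σ.2.1 σ.2.2.1 σ.2.2.2
  refine ⟨∏ σ, Q σ, Finset.prod_ne_zero_iff.mpr fun σ _ => hQ σ, fun i j κ e t => ?_⟩
  rw [map_prod]
  exact Finset.prod_eq_zero (Finset.mem_univ (i, j, κ, e)) (hQ0 (i, j, κ, e) t)

/-- Surjectivity of the parametrization. -/
lemma mem_stratum {M N s : ℕ} (i j : Fin M) (x y : Fin M → ℂ) (hx : x i = 1) (hy : (y j).im = 0)
    (e : Fin N → Bool) (z : Fin N → ℂ) (hz : ∀ n, (z n).re = if e n then 1 else 0)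
    (γ : Fin N → Idx M s → ℂ) (κ : Fin N → Idx M s) (hκ : ∀ n, coefL s x y (z n) (κ n) ≠ 0)
    (hγ : ∀ n, ∑ k, coefL s x y (z n) k * γ n k = 0) :
    ∃ t : Par M N s i j κ → ℝ, outP e t = γ := by
  let g : Fin N → Idx M s → ℂ := fun n k => γ n k / coefL s x y (z n) (κ n)
  let t : Par M N s i j κ → ℝ := Sum.elim
    (Sum.elim (fun a => if a.2 = 0 then (x a.1.1).re else (x a.1.1).im)
      (fun a => if a.2 = 0 then (y a.1.1).re else (y a.1.1).im))
    (Sum.elim (Sum.elim (fun _ => (y j).re) (fun n => (z n).im))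
      (fun a => if a.2 = 0 then (g a.1.1 a.1.2.1).re else (g a.1.1 a.1.2.1).im))
  have hxt : xP t = x := by
    funext k
    unfold xP
    split_ifs with hk
    · rw [hk, hx]
    · simp [t]
  have hyt : yP t = y := by
    funext k
    unfold yP
    split_ifs with hk
    · subst hk
      apply Complex.ext <;> simp [t, hy]
    · simp [t]
  have hzt : zP e t = z := by
    funext n
    apply Complex.ext
    · simp [zP, hz]
    · simp [zP, t]
  have hgt : ∀ n k, gP t n k = if k = κ n then 0 else g n k := by
    intro n k
    unfold gP
    split_ifs with hk
    · rfl
    · simp [t]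
  refine ⟨t, ?_⟩
  funext n k
  unfold outP
  rw [hxt, hyt, hzt]
  split_ifs with hk
  · simp only [hgt]
    have h1 := hγ n
    rw [← Finset.add_sum_erase _ _ (Finset.mem_univ (κ n))] at h1
    rw [← Finset.add_sum_erase _ _ (Finset.mem_univ (κ n))]
    have h2 : ∑ k ∈ Finset.univ.erase (κ n),
        coefL s x y (z n) k * (if k = κ n then 0 else g n k) =
        (∑ k ∈ Finset.univ.erase (κ n), coefL s x y (z n) k * γ n k) /
          coefL s x y (z n) (κ n) := by
      rw [Finset.sum_div]
      refine Finset.sum_congr rfl fun k hk => ?_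
      rw [if_neg (Finset.ne_of_mem_erase hk)]
      simp only [g]
      ring
    rw [h2, hk, eq_neg_of_add_eq_zero_right h1]
    have := hκ n
    field_simp
    simp
  · rw [hgt, if_neg hk]
    simp only [g]
    have := hκ n
    field_simp

/-- Normal form of rank one Hermitian matrices. -/
lemma rank_one_form {M : ℕ} (A : Matrix (Fin M) (Fin M) ℂ) (hA : A.IsHermitian)
    (h1 : A.rank = 1) :
    ∃ (i : Fin M) (x : Fin M → ℂ) (a : ℝ), x i = 1 ∧ a ≠ 0 ∧
      ∀ k l, A k l = a * (x k * star (x l)) := by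
  obtain ⟨v, hv, hspan⟩ := finrank_eq_one_iff'.mp h1
  have hcol : ∀ l, ∃ c : ℂ, ∀ k, A k l = c * (v : Fin M → ℂ) k := by
    intro l
    obtain ⟨c, hc⟩ := hspan ⟨A.mulVecLin (Pi.single l 1), LinearMap.mem_range_self _ _⟩
    refine ⟨c, fun k => ?_⟩
    have := congrFun (congrArg Subtype.val hc) k
    simpa using this.symm
  choose c hc using hcol
  obtain ⟨u, hu⟩ := v
  simp only at hc
  have hu0 : ∃ i, u i ≠ 0 := by
    by_contra hcon
    push Not at hcon
    exact hv (Subtype.ext (funext hcon))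
  obtain ⟨i, hi⟩ := hu0
  have hherm : ∀ k l, c l * u k = star (c k) * star (u l) := by
    intro k l
    have := hA.apply l k
    rw [hc, hc] at this
    rw [← hc, ← hA.apply, hc, star_mul']
  have hcl : ∀ l, c l = star (c i) / u i * star (u l) := by
    intro l
    have := hherm i l
    field_simp
    linear_combination this
  have hii : star (c i * u i) = c i * u i := by
    rw [star_mul']
    exact (hherm i i).symm
  refine ⟨i, fun k => u k / u i, (c i * u i).re, div_self hi, ?_, ?_⟩
  · intro h0
    have h2 : c i * u i = 0 := Complex.ext h0 (by
      have := Complex.conj_eq_iff_im.mp hii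
      simpa using this)
    have h3 : c i = 0 := (mul_eq_zero.mp h2).resolve_right hi
    have h4 : A = 0 := by
      ext k l
      rw [hc, hcl, h3]
      simp
    rw [h4] at h1
    simp at h1
  · intro k l
    rw [Complex.conj_eq_iff_re.mp hii, hc, hcl]
    have hi' : star (u i) ≠ 0 := by simpa using hi
    rw [star_div₀]
    have h5 := hherm i i
    field_simp
    linear_combination (-u k * star (u l)) * h5

/-- phases as `z / conj z`. -/
lemma exists_phase (p q : ℂ) (h : ‖p‖ = ‖q‖) :
    ∃ (e : Bool) (z : ℂ), z ≠ 0 ∧ z.re = (if e then 1 else 0) ∧ star z * p = z * q := by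
  have key : ∃ z : ℂ, z ≠ 0 ∧ star z * p = z * q := by
    by_cases hq : q = 0
    · have hp : p = 0 := by simpa [hq] using h
      exact ⟨1, one_ne_zero, by simp [hp, hq]⟩
    · obtain ⟨z, hz⟩ := IsAlgClosed.exists_eq_mul_self (p / q)
      have hn : ‖z‖ * ‖z‖ = 1 := by
        rw [← norm_mul, ← hz, norm_div, h, div_self (norm_ne_zero_iff.mpr hq)]
      have hzz : star z * z = 1 := by
        have := Complex.conj_mul' z
        rw [Complex.star_def, this, pow_two]
        exact_mod_cast hn
      refine ⟨z, ?_, ?_⟩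
      · rintro rfl
        simp at hzz
      · have hp : p = z * z * q := by rw [← hz]; field_simp
        rw [hp]
        linear_combination (z * q) * hzz
  obtain ⟨z, hz, hzz⟩ := key
  by_cases hre : z.re = 0
  · exact ⟨false, z, hz, by simpa using hre, hzz⟩
  · refine ⟨true, ((z.re⁻¹ : ℝ) : ℂ) * z, ?_, ?_, ?_⟩
    · simp [hz, hre]
    · simp [hre]
    · rw [star_mul']
      simp only [Complex.star_def, Complex.conj_ofReal] at hzz ⊢
      linear_combination ((z.re⁻¹ : ℝ) : ℂ) * hzz


/-- Complex coordinates of a pair. -/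
def coordOf {M N : ℕ} (s : ℕ) (p : Matrix (Fin M) (Fin N) ℂ × Matrix (Fin M) (Fin N) ℂ)
    (n : Fin N) : Idx M s → ℂ
  | Sum.inl k => p.1 k n
  | Sum.inr k => p.2 k.1 n

lemma sum_coefL {M N s : ℕ} (p : Matrix (Fin M) (Fin N) ℂ × Matrix (Fin M) (Fin N) ℂ)
    (hp : ∀ i : Fin M, (i : ℕ) < s → p.1 i = p.2 i) (x y : Fin M → ℂ) (z : ℂ) (n : Fin N) :
    ∑ k, coefL s x y z k * coordOf s p n k =
      star z * (∑ k, star (x k) * p.1 k n) - z * (∑ k, star (y k) * p.2 k n) := by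
  rw [Fintype.sum_sum_type]
  simp only [coefL, coordOf]
  have h1 : ∑ k : {k : Fin M // s ≤ (k : ℕ)}, -(z * star (y k.1)) * p.2 k.1 n =
      ∑ k : Fin M, if s ≤ (k : ℕ) then -(z * star (y k)) * p.2 k n else 0 := by
    rw [← Finset.sum_filter]
    exact (Finset.sum_subtype _ (by simp) (fun k : Fin M => -(z * star (y k)) * p.2 k n)).symm
  rw [h1, ← Finset.sum_add_distrib, Finset.mul_sum, Finset.mul_sum, ← Finset.sum_sub_distrib]
  refine Finset.sum_congr rfl fun k _ => ?_
  by_cases hk : (k : ℕ) < s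
  · rw [if_pos hk, if_neg (by omega), hp k hk]
    ring
  · rw [if_neg hk, if_pos (by omega)]
    ring

lemma coefL_ne {M : ℕ} (s : ℕ) (x y : Fin M → ℂ) (z : ℂ) (hz : z ≠ 0)
    (hxy : ∃ k l, x k * star (x l) ≠ y k * star (y l)) :
    ∃ k, coefL s x y z k ≠ 0 := by
  by_contra hcon
  push Not at hcon
  have hz' : star z ≠ 0 := by simpa using hz
  have key : ∀ k, star z * star (x k) = z * star (y k) := by
    intro k
    have h1 := hcon (Sum.inl k)
    simp only [coefL] at h1
    split_ifs at h1 with hk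
    · exact sub_eq_zero.mp h1
    · have h2 := hcon (Sum.inr ⟨k, by omega⟩)
      simp only [coefL] at h2
      rw [h1, neg_eq_zero.mp h2]
  obtain ⟨k, l, hkl⟩ := hxy
  apply hkl
  have h1 := congrArg star (key k)
  rw [star_mul', star_mul', star_star, star_star, star_star] at h1
  have h2 := key l
  apply mul_left_cancel₀ (mul_ne_zero hz hz')
  linear_combination (star z * star (x l)) * h1 + (star z * y k) * h2

lemma quad_form {M : ℕ} (A : Matrix (Fin M) (Fin M) ℂ) (x : Fin M → ℂ) (a : ℝ)
    (hA : ∀ k l, A k l = a * (x k * star (x l))) (v : Fin M → ℂ) :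
    star v ⬝ᵥ (A *ᵥ v) = ((a * ‖∑ k, star (x k) * v k‖ ^ 2 : ℝ) : ℂ) := by
  have h1 : A *ᵥ v = fun k => a * x k * (∑ l, star (x l) * v l) := by
    funext k
    simp only [Matrix.mulVec, dotProduct, hA, Finset.mul_sum]
    refine Finset.sum_congr rfl fun l _ => by ring
  have h2 : star v ⬝ᵥ (A *ᵥ v) =
      a * (star (∑ l, star (x l) * v l) * (∑ l, star (x l) * v l)) := by
    rw [h1]
    simp only [dotProduct, Pi.star_apply, star_sum, star_mul', star_star]
    rw [Finset.sum_mul, Finset.mul_sum]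
    refine Finset.sum_congr rfl fun l _ => by ring
  rw [h2, Complex.star_def, Complex.conj_mul']
  push_cast
  rfl

lemma exists_ne_of_rank {M N : ℕ} (U : Matrix (Fin M) (Fin N) ℂ) (hU : U.rank = M)
    (x : Fin M → ℂ) (hx : x ≠ 0) : ∃ n, ∑ k, star (x k) * U k n ≠ 0 := by
  by_contra hcon
  push Not at hcon
  have hli : LinearIndependent ℂ U.row := by
    rw [linearIndependent_iff_card_eq_finrank_span, Set.finrank, ← Matrix.rank_eq_finrank_span_row,
      hU, Fintype.card_fin]
  rw [Fintype.linearIndependent_iff] at hli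
  have h1 := hli (fun k => star (x k)) (by
    funext n
    simpa [Matrix.row] using hcon n)
  apply hx
  funext k
  simpa using h1 k

lemma bad_mem {M N s : ℕ} (p : Matrix (Fin M) (Fin N) ℂ × Matrix (Fin M) (Fin N) ℂ)
    (hp : IsSOverlappingPair s p) (A B : Matrix (Fin M) (Fin M) ℂ)
    (hA : A.IsHermitian) (hB : B.IsHermitian) (hA1 : A.rank = 1) (hB1 : B.rank = 1)
    (hAB : A ≠ B)
    (heq : ∀ n : Fin N,
      star (fun i => p.1 i n) ⬝ᵥ (A *ᵥ fun i => p.1 i n) =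
      star (fun i => p.2 i n) ⬝ᵥ (B *ᵥ fun i => p.2 i n)) :
    ∃ (i j : Fin M) (κ : Fin N → Idx M s) (e : Fin N → Bool) (t : Par M N s i j κ → ℝ),
      outP e t = coordOf s p := by
  obtain ⟨hr1, -, hsh, -⟩ := hp
  obtain ⟨i, x, a, hxi, ha, hAx⟩ := rank_one_form A hA hA1
  obtain ⟨j, y, b, hyj, hb, hBy⟩ := rank_one_form B hB hB1
  have heq' : ∀ n, a * ‖∑ k, star (x k) * p.1 k n‖ ^ 2 = b * ‖∑ k, star (y k) * p.2 k n‖ ^ 2 := by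
    intro n
    have := heq n
    rw [quad_form A x a hAx, quad_form B y b hBy] at this
    exact_mod_cast this
  have hba : 0 < b / a := by
    obtain ⟨n, hn⟩ := exists_ne_of_rank p.1 hr1 x (fun h0 => by simp [h0] at hxi)
    have h1 := heq' n
    have h2 : 0 < ‖∑ k, star (x k) * p.1 k n‖ ^ 2 := by positivity
    have h3 : ‖∑ k, star (x k) * p.1 k n‖ ^ 2 = b / a * ‖∑ k, star (y k) * p.2 k n‖ ^ 2 := by
      field_simp
      linear_combination h1
    rw [h3] at h2
    exact pos_of_mul_pos_left h2 (by positivity)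
  set r := Real.sqrt (b / a) with hr
  have hrr : r * r = b / a := Real.mul_self_sqrt hba.le
  have hr0 : 0 ≤ r := Real.sqrt_nonneg _
  set y' : Fin M → ℂ := fun k => r * y k with hy'
  have hsum : ∀ n, ∑ k, star (y' k) * p.2 k n = r * ∑ k, star (y k) * p.2 k n := by
    intro n
    rw [Finset.mul_sum]
    refine Finset.sum_congr rfl fun k _ => ?_
    simp only [hy', star_mul', Complex.star_def, Complex.conj_ofReal]
    ring
  have hnorm : ∀ n, ‖∑ k, star (x k) * p.1 k n‖ = ‖∑ k, star (y' k) * p.2 k n‖ := by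
    intro n
    rw [hsum, norm_mul, Complex.norm_real, Real.norm_of_nonneg hr0]
    rw [← sq_eq_sq₀ (by positivity) (by positivity), mul_pow, pow_two r, hrr]
    have h1 := heq' n
    field_simp
    linear_combination h1
  choose e z hz0 hze hzz using fun n => exists_phase _ _ (hnorm n)
  have hxy : ∃ k l, x k * star (x l) ≠ y' k * star (y' l) := by
    by_contra hcon
    push Not at hcon
    apply hAB
    ext k l
    rw [hAx, hBy, hcon]
    simp only [hy', star_mul', Complex.star_def, Complex.conj_ofReal]
    have h1 : (a : ℂ) * (r * r) = b := by
      have : a * (r * r) = b := by rw [hrr]; field_simp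
      exact_mod_cast this
    rw [← h1]
    ring
  choose κ hκ using fun n => coefL_ne s x y' (z n) (hz0 n) hxy
  obtain ⟨t, ht⟩ := mem_stratum i j x y' hxi (by simp [hy', hyj]) e z hze (coordOf s p) κ hκ
    (fun n => by rw [sum_coefL p hsh, hzz, sub_self])
  exact ⟨i, j, κ, e, t, ht⟩

/-- The embedding of coordinates into the coordinates of all pairs. -/
def emb {M N s : ℕ} :
    Coord M N s → ((Fin M × Fin N) × Fin 2) ⊕ ((Fin M × Fin N) × Fin 2)
  | ((n, Sum.inl k), a) => Sum.inl ((k, n), a)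
  | ((n, Sum.inr k), a) => Sum.inr ((k.1, n), a)

lemma realizePair_emb {M N s : ℕ} (p : Matrix (Fin M) (Fin N) ℂ × Matrix (Fin M) (Fin N) ℂ) :
    realizePair p ∘ (emb (s := s)) = toReal (coordOf s p) := by
  funext ⟨⟨n, k⟩, a⟩
  rcases k with k | k <;> simp [emb, realizePair, toReal, coordOf]

lemma exists_generic {M N s : ℕ} (hN : Fintype.card (Idx M s) ≤ N)
    (Q : MvPolynomial (Coord M N s) ℝ) (hQ : Q ≠ 0) :
    ∃ γ : Idx M s → Fin N → ℂ, LinearIndependent ℂ γ ∧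
      MvPolynomial.eval (toReal fun n k => γ k n) Q ≠ 0 := by
  let Φ : (Coord M N s → ℝ) → (Idx M s → Fin N → ℂ) :=
    fun v k n => (v ((n, k), 0) : ℂ) + (v ((n, k), 1) : ℂ) * Complex.I
  have hΦ : Continuous Φ := by
    fun_prop
  have hΦr : ∀ v, toReal (fun n k => Φ v k n) = v := by
    intro v
    funext ⟨⟨n, k⟩, a⟩
    fin_cases a <;> simp [toReal, Φ]
  have hopen : IsOpen {v | LinearIndependent ℂ (Φ v)} :=
    (isOpen_setOfPred_linearIndependent (𝕜 := ℂ) (E := Fin N → ℂ) (ι := Idx M s)).preimage hΦ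
  obtain ⟨f⟩ := Function.Embedding.nonempty_of_card_le (α := Idx M s) (β := Fin N) (by simpa using hN)
  let γ₀ : Idx M s → Fin N → ℂ := fun k => Pi.basisFun ℂ (Fin N) (f k)
  have hγ₀ : LinearIndependent ℂ γ₀ :=
    (Pi.basisFun ℂ (Fin N)).linearIndependent.comp f f.injective
  have hΦγ : Φ (toReal fun n k => γ₀ k n) = γ₀ := by
    funext k n
    simp [Φ, toReal]
  by_contra hcon
  push Not at hcon
  obtain ⟨ε, hε, hball⟩ := Metric.isOpen_iff.mp hopen (toReal fun n k => γ₀ k n) (by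
    show LinearIndependent ℂ (Φ _)
    rw [hΦγ]; exact hγ₀)
  apply hQ
  refine MvPolynomial.funext_set (fun c => Metric.ball (toReal (fun n k => γ₀ k n) c) ε) ?_ ?_
  · intro c
    rw [Real.ball_eq_Ioo]
    exact Set.Ioo_infinite (by linarith)
  · intro v hv
    rw [← ball_pi _ hε] at hv
    have h1 := hcon (Φ v) (hball hv)
    rw [hΦr] at h1
    simpa using h1

/-- The pair with given coordinates. -/
def pairOf {M N s : ℕ} (γ : Idx M s → Fin N → ℂ) :
    Matrix (Fin M) (Fin N) ℂ × Matrix (Fin M) (Fin N) ℂ :=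
  (fun i => γ (Sum.inl i),
   fun i => γ (if h : s ≤ (i : ℕ) then Sum.inr ⟨i, h⟩ else Sum.inl i))

lemma coordOf_pairOf {M N s : ℕ} (γ : Idx M s → Fin N → ℂ) :
    coordOf s (pairOf γ) = fun n k => γ k n := by
  funext n k
  rcases k with k | k
  · rfl
  · simp [coordOf, pairOf, k.2]

lemma pairOf_overlapping {M N s : ℕ} (hs : s ≤ M) (γ : Idx M s → Fin N → ℂ)
    (hγ : LinearIndependent ℂ γ) : IsSOverlappingPair s (pairOf γ) := by
  have hl1 : LinearIndependent ℂ (fun i => (pairOf γ).1 i) :=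
    hγ.comp (fun i => Sum.inl i) Sum.inl_injective
  have hl2 : LinearIndependent ℂ (fun i => (pairOf γ).2 i) := by
    refine hγ.comp (fun i : Fin M => if h : s ≤ (i : ℕ) then Sum.inr ⟨i, h⟩ else Sum.inl i) ?_
    intro a b hab
    simp only at hab
    split_ifs at hab
    · simpa using hab
    · simpa using hab
  refine ⟨?_, ?_, ?_, ?_⟩
  · simpa using LinearIndependent.rank_matrix (M := (pairOf γ).1) hl1
  · simpa using LinearIndependent.rank_matrix (M := (pairOf γ).2) hl2
  · intro i hi
    simp [pairOf, Nat.not_le.mpr hi]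
  · have h1 : Module.finrank ℂ (rowSpanC (pairOf γ).1) = M := by
      exact (finrank_span_eq_card hl1).trans (Fintype.card_fin M)
    have h2 : Module.finrank ℂ (rowSpanC (pairOf γ).2) = M := by
      exact (finrank_span_eq_card hl2).trans (Fintype.card_fin M)
    have h3 : rowSpanC (pairOf γ).1 ⊔ rowSpanC (pairOf γ).2 = 
        Submodule.span ℂ (Set.range γ) := by
      unfold rowSpanC
      rw [← Submodule.span_union]
      congr 1
      ext v
      constructor
      · rintro (⟨i, rfl⟩ | ⟨i, rfl⟩)
        · exact ⟨_, rfl⟩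
        · exact ⟨_, rfl⟩
      · rintro ⟨k | k, rfl⟩
        · exact Or.inl ⟨k, rfl⟩
        · exact Or.inr ⟨k.1, by simp [pairOf, k.2]⟩
    have h4 := Submodule.finrank_sup_add_finrank_inf_eq
      (rowSpanC (pairOf γ).1) (rowSpanC (pairOf γ).2)
    rw [h3, finrank_span_eq_card hγ, card_Idx M s hs, h1, h2] at h4
    omega

end GenOverlap

/-- If N > 4M−3 then for a generic pair of s-overlapping frames
(U,V) = ((α₁,…,α_N),(β₁,…,β_N)) on ℂ^M (columns of the frame matrices), there is no pair
of distinct rank-one Hermitian matrices (A,B) with αₙ* A αₙ = βₙ* B βₙ for all n. -/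
theorem generic_overlapping_pairs_complex (M N s : ℕ) (hs : s ≤ M)
    (h : (N : ℤ) > 4 * (M : ℤ) - 3) :
    ∃ W : Set (Matrix (Fin M) (Fin N) ℂ × Matrix (Fin M) (Fin N) ℂ),
      IsRealZariskiOpenPairC W ∧ (∃ p ∈ W, IsSOverlappingPair s p) ∧
      ∀ p ∈ W, IsSOverlappingPair s p →
        ¬ ∃ A B : Matrix (Fin M) (Fin M) ℂ,
            A.IsHermitian ∧ B.IsHermitian ∧ A.rank = 1 ∧ B.rank = 1 ∧ A ≠ B ∧
            ∀ n : Fin N,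
              star (fun i => p.1 i n) ⬝ᵥ (A *ᵥ fun i => p.1 i n) =
              star (fun i => p.2 i n) ⬝ᵥ (B *ᵥ fun i => p.2 i n) := by
  rcases Nat.eq_zero_or_pos M with hM | hM
  · subst hM
    obtain rfl : s = 0 := by omega
    refine ⟨Set.univ, ⟨{1}, by ext; simp⟩, ⟨(0, 0), trivial, ?_⟩, ?_⟩
    · refine ⟨by simp, by simp, fun i => i.elim0, ?_⟩
      have h0 : rowSpanC (0 : Matrix (Fin 0) (Fin N) ℂ) = ⊥ := by
        simp [rowSpanC]
      simp [h0]
    · rintro p - - ⟨A, B, -, -, hA, -⟩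
      have : A = 0 := by ext i; exact i.elim0
      simp [this] at hA
  · have hN : 4 * M - 3 < N := by omega
    obtain ⟨Q, hQ, hQ0⟩ := GenOverlap.exists_poly (M := M) (N := N) s hN
    have hev : ∀ p : Matrix (Fin M) (Fin N) ℂ × Matrix (Fin M) (Fin N) ℂ,
        MvPolynomial.eval (realizePair p) (MvPolynomial.rename GenOverlap.emb Q) =
          MvPolynomial.eval (GenOverlap.toReal (GenOverlap.coordOf s p)) Q := by
      intro p
      rw [MvPolynomial.eval_rename, GenOverlap.realizePair_emb]
    refine ⟨{p | MvPolynomial.eval (realizePair p) (MvPolynomial.rename GenOverlap.emb Q) ≠ 0},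
      ⟨{MvPolynomial.rename GenOverlap.emb Q}, by simp⟩, ?_, ?_⟩
    · obtain ⟨γ, hγ, hne⟩ := GenOverlap.exists_generic (N := N) (s := s)
        (by rw [GenOverlap.card_Idx M s hs]; omega) Q hQ
      refine ⟨GenOverlap.pairOf γ, ?_, GenOverlap.pairOf_overlapping hs γ hγ⟩
      rw [Set.mem_ofPred_eq, hev, GenOverlap.coordOf_pairOf]
      exact hne
    · rintro p hpW hp ⟨A, B, hA, hB, hA1, hB1, hAB, heq⟩
      rw [Set.mem_ofPred_eq, hev] at hpW
      obtain ⟨i, j, κ, e, t, ht⟩ := GenOverlap.bad_mem p hp A B hA hB hA1 hB1 hAB heq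
      apply hpW
      rw [← ht]
      exact hQ0 i j κ e t
end
end

section
/- Let N be an even positive integer. Define the real discrete Fourier transform F^r : ℝ^N → ℝ^N by (F^r x)[n] = Σ_{k=0}^{N−1} x[k]·cos(2πnk/N) for 0 ≤ n ≤ N/2 and (F^r x)[n] = Σ_{k=0}^{N−1} x[k]·sin(2πnk/N) for N/2 < n ≤ N−1, and for z ∈ ℝ^N define b_z ∈ ℝ^{N/2+1} by b_z[0] = z[0]², b_z[N/2] = z[N/2]², and b_z[k] = z[k]² + z[N−k]² for 1 ≤ k ≤ N/2 − 1. Then for all x, y ∈ ℝ^N, a_x = a_y if and only if b_{F^r x} = b_{F^r y}. -/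
/-!
STATEMENT 13: For N even, a_x = a_y iff b_{F^r x} = b_{F^r y}, where F^r is the real
discrete Fourier transform and b_z = (z[0]², z[1]²+z[N−1]², …, z[N/2]²) ∈ ℝ^{N/2+1}.
-/

noncomputable section

/-- The periodic auto-correlation of x ∈ ℝ^N (indices mod N). -/
def autocorr {N : ℕ} [NeZero N] (x : ZMod N → ℝ) : ZMod N → ℝ :=
  fun ℓ => ∑ n : ZMod N, x n * x (n + ℓ)

/-- The real discrete Fourier transform on ℝ^N (N = 2·Nh):
(F^r x)[n] = Σ_k x[k]·cos(2πnk/N) for 0 ≤ n ≤ N/2, and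
(F^r x)[n] = Σ_k x[k]·sin(2πnk/N) for N/2 < n ≤ N−1. -/
def realDFT {N : ℕ} [NeZero N] (Nh : ℕ) (x : ZMod N → ℝ) : ZMod N → ℝ :=
  fun n =>
    if n.val ≤ Nh then
      ∑ k : ZMod N, x k * Real.cos (2 * Real.pi * n.val * k.val / N)
    else
      ∑ k : ZMod N, x k * Real.sin (2 * Real.pi * n.val * k.val / N)

/-- b_z ∈ ℝ^{N/2+1}: b_z[0] = z[0]², b_z[N/2] = z[N/2]², and
b_z[k] = z[k]² + z[N−k]² for 1 ≤ k ≤ N/2−1. -/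
def bMap {N : ℕ} [NeZero N] (Nh : ℕ) (z : ZMod N → ℝ) : Fin (Nh + 1) → ℝ :=
  fun j =>
    if (j : ℕ) = 0 then z 0 ^ 2
    else if (j : ℕ) = Nh then z (Nh : ZMod N) ^ 2
    else z ((j : ℕ) : ZMod N) ^ 2 + z (-((j : ℕ) : ZMod N)) ^ 2

/-- The complex DFT (with positive sign) of a real vector. -/
def cDFT {N : ℕ} [NeZero N] (x : ZMod N → ℝ) (k : ZMod N) : ℂ :=
  ∑ j : ZMod N, (x j : ℂ) * ZMod.stdAddChar (j * k)

lemma stdAddChar_mul_val {N : ℕ} [NeZero N] (j k : ZMod N) :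
    ZMod.stdAddChar (j * k) =
      Complex.exp (((2 * Real.pi * k.val * j.val / N : ℝ) : ℂ) * Complex.I) := by
  have h : j * k = (((j.val * k.val : ℕ) : ℤ) : ZMod N) := by
    push_cast
    rw [ZMod.natCast_zmod_val, ZMod.natCast_zmod_val]
  rw [h, ZMod.stdAddChar_coe]
  congr 1
  push_cast
  ring

lemma cDFT_re {N : ℕ} [NeZero N] (x : ZMod N → ℝ) (n : ZMod N) :
    (cDFT x n).re = ∑ k : ZMod N, x k * Real.cos (2 * Real.pi * n.val * k.val / N) := by
  simp only [cDFT, Complex.re_sum, Complex.re_ofReal_mul, stdAddChar_mul_val,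
    Complex.exp_ofReal_mul_I_re]

lemma cDFT_im {N : ℕ} [NeZero N] (x : ZMod N → ℝ) (n : ZMod N) :
    (cDFT x n).im = ∑ k : ZMod N, x k * Real.sin (2 * Real.pi * n.val * k.val / N) := by
  simp only [cDFT, Complex.im_sum, Complex.im_ofReal_mul, stdAddChar_mul_val,
    Complex.exp_ofReal_mul_I_im]

lemma cDFT_neg {N : ℕ} [NeZero N] (x : ZMod N → ℝ) (k : ZMod N) :
    cDFT x (-k) = (starRingEnd ℂ) (cDFT x k) := by
  simp only [cDFT, map_sum, map_mul, Complex.conj_ofReal]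
  refine Finset.sum_congr rfl fun j _ => ?_
  rw [mul_neg, AddChar.map_neg_eq_conj]

lemma dft_autocorr {N : ℕ} [NeZero N] (x : ZMod N → ℝ) (k : ZMod N) :
    ZMod.dft (fun l => (autocorr x l : ℂ)) k = (Complex.normSq (cDFT x k) : ℂ) := by
  rw [← Complex.mul_conj, ← cDFT_neg, ZMod.dft_apply]
  simp only [autocorr, cDFT, Complex.ofReal_sum, Complex.ofReal_mul, smul_eq_mul, Finset.mul_sum,
    Finset.sum_mul]
  rw [Finset.sum_comm]
  conv_rhs => rw [Finset.sum_comm]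
  refine Finset.sum_congr rfl fun n _ => ?_
  refine Fintype.sum_equiv (Equiv.addLeft n) _ _ fun l => ?_
  have h : -(l * k) = n * k + (n + l) * -k := by ring
  simp only [Equiv.coe_addLeft, h, AddChar.map_add_eq_mul]
  ring

lemma autocorr_iff_normSq {N : ℕ} [NeZero N] (x y : ZMod N → ℝ) :
    autocorr x = autocorr y ↔
      ∀ k, Complex.normSq (cDFT x k) = Complex.normSq (cDFT y k) := by
  constructor
  · intro h k
    have := dft_autocorr x k
    rw [h, dft_autocorr] at this
    exact_mod_cast this.symm
  · intro h
    have : (fun l => (autocorr x l : ℂ)) = fun l => (autocorr y l : ℂ) := by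
      apply ZMod.dft.injective
      funext k
      rw [dft_autocorr, dft_autocorr, h]
    funext l
    exact_mod_cast congrFun this l

lemma cDFT_im_eq_zero {N : ℕ} [NeZero N] (x : ZMod N → ℝ) (k : ZMod N) (hk : -k = k) :
    (cDFT x k).im = 0 := by
  have h := cDFT_neg x k
  rw [hk] at h
  exact Complex.conj_eq_iff_im.1 h.symm

lemma bMap_realDFT {N Nh : ℕ} [NeZero N] (hN : N = 2 * Nh) (hNh : 0 < Nh)
    (x : ZMod N → ℝ) (j : Fin (Nh + 1)) :
    bMap Nh (realDFT Nh x) j = Complex.normSq (cDFT x ((j : ℕ) : ZMod N)) := by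
  have hj := j.isLt
  have hval : (((j : ℕ) : ZMod N)).val = (j : ℕ) := ZMod.val_natCast_of_lt (by omega)
  have hre : realDFT Nh x ((j : ℕ) : ZMod N) = (cDFT x ((j : ℕ) : ZMod N)).re := by
    rw [cDFT_re, realDFT, if_pos (by omega)]
  rw [Complex.normSq_apply]
  unfold bMap
  split_ifs with h0 h1
  · rw [h0, Nat.cast_zero] at hre ⊢
    rw [hre, cDFT_im_eq_zero x 0 neg_zero]
    ring
  · rw [h1] at hre ⊢
    rw [hre, cDFT_im_eq_zero x _ ?_]
    · ring
    · rw [neg_eq_iff_add_eq_zero, ← Nat.cast_add, ← two_mul, ← hN, ZMod.natCast_self]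
  · have hne : ((j : ℕ) : ZMod N) ≠ 0 := by
      intro h
      rw [h, ZMod.val_zero] at hval
      omega
    have hv : (-((j : ℕ) : ZMod N)).val = N - j := by
      rw [ZMod.neg_val, if_neg hne, hval]
    have him : realDFT Nh x (-((j : ℕ) : ZMod N)) = (cDFT x (-((j : ℕ) : ZMod N))).im := by
      rw [cDFT_im, realDFT, if_neg (by omega)]
    rw [hre, him, cDFT_neg, Complex.conj_im]
    ring

/-- For N even positive: a_x = a_y iff b_{F^r x} = b_{F^r y}. -/
theorem autocorr_iff_bmap (N Nh : ℕ) [NeZero N] (hN : N = 2 * Nh) (hNh : 0 < Nh) :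
    ∀ x y : ZMod N → ℝ,
      autocorr x = autocorr y ↔ bMap Nh (realDFT Nh x) = bMap Nh (realDFT Nh y) := by
  intro x y
  rw [autocorr_iff_normSq]
  constructor
  · intro h
    funext j
    rw [bMap_realDFT hN hNh, bMap_realDFT hN hNh, h]
  · intro h
    have key : ∀ k : ZMod N, k.val ≤ Nh →
        Complex.normSq (cDFT x k) = Complex.normSq (cDFT y k) := by
      intro k hk
      have := congrFun h ⟨k.val, by omega⟩
      rw [bMap_realDFT hN hNh, bMap_realDFT hN hNh] at this
      simpa using this
    intro k
    by_cases hk : k.val ≤ Nh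
    · exact key k hk
    · have := key (-k) (by
        rw [ZMod.neg_val]
        split_ifs <;> omega)
      rwa [cDFT_neg, cDFT_neg, Complex.normSq_conj, Complex.normSq_conj] at this
end
end

section
/- Let N be even, let U = (α_0,…,α_{N−1}) be an N-element frame on ℝ^M, and define B_U : ℝ^M → ℝ^{N/2+1} by B_U(x) = ((α_0ᵀx)², (α_1ᵀx)² + (α_{N−1}ᵀx)², …, (α_{N/2−1}ᵀx)² + (α_{N/2+1}ᵀx)², (α_{N/2}ᵀx)²). Then the condition 'for all x, y ∈ ℝ^M, B_U(x) = B_U(y) implies y = x or y = −x' fails if and only if there exists a nonzero real symmetric M×M matrix A with rank(A) ≤ 2 such that α_0ᵀ A α_0 = 0, α_{N/2}ᵀ A α_{N/2} = 0, and α_kᵀ A α_k + α_{N−k}ᵀ A α_{N−k} = 0 for all k = 1,…,N/2 − 1. -/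
/-!
STATEMENT 14: For N even and a frame U = (α_0,…,α_{N−1}) on ℝ^M, the sign-recovery
property for B_U fails iff there exists a nonzero real symmetric M×M matrix A of rank
at most 2 with α_0ᵀAα_0 = 0, α_{N/2}ᵀAα_{N/2} = 0, and
α_kᵀAα_k + α_{N−k}ᵀAα_{N−k} = 0 for k = 1,…,N/2−1.
-/

open Matrix

noncomputable section

/-- The map B_U : ℝ^M → ℝ^{N/2+1} (N = 2·Nh, frame indexed by ZMod N):
B_U(x)[0] = (α_0ᵀx)², B_U(x)[N/2] = (α_{N/2}ᵀx)², and
B_U(x)[k] = (α_kᵀx)² + (α_{N−k}ᵀx)² for 1 ≤ k ≤ N/2−1. -/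
def BMap {M N : ℕ} [NeZero N] (Nh : ℕ) (U : ZMod N → (Fin M → ℝ)) (x : Fin M → ℝ) :
    Fin (Nh + 1) → ℝ :=
  fun j =>
    if (j : ℕ) = 0 then (U 0 ⬝ᵥ x) ^ 2
    else if (j : ℕ) = Nh then (U (Nh : ZMod N) ⬝ᵥ x) ^ 2
    else (U ((j : ℕ) : ZMod N) ⬝ᵥ x) ^ 2 + (U (-((j : ℕ) : ZMod N)) ⬝ᵥ x) ^ 2

/-- Every element of ZMod (2 * Nh) is 0, Nh, k or -k. -/
lemma zmod_cases (N Nh : ℕ) [NeZero N] (hN : N = 2 * Nh) (a : ZMod N) :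
    a = 0 ∨ a = (Nh : ZMod N) ∨ ∃ k : ℕ, 0 < k ∧ k < Nh ∧ (a = (k : ZMod N) ∨ a = -(k : ZMod N)) := by
  have h1 : ((a.val : ℕ) : ZMod N) = a := ZMod.natCast_zmod_val a
  have h2 := ZMod.val_lt a
  rcases Nat.eq_zero_or_pos a.val with h | h
  · left; rw [← h1, h]; simp
  · right
    rcases lt_trichotomy a.val Nh with h3 | h3 | h3
    · right; exact ⟨a.val, h, h3, Or.inl h1.symm⟩
    · left; rw [← h3, h1]
    · right
      refine ⟨N - a.val, by omega, by omega, Or.inr ?_⟩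
      rw [Nat.cast_sub h2.le, h1]; simp

lemma bmap_iff {M N : ℕ} [NeZero N] (Nh : ℕ) (hNh : 0 < Nh) (U : ZMod N → (Fin M → ℝ))
    (A : Matrix (Fin M) (Fin M) ℝ) (x y : Fin M → ℝ)
    (hA : ∀ w : Fin M → ℝ, w ⬝ᵥ (A *ᵥ w) = (w ⬝ᵥ x) ^ 2 - (w ⬝ᵥ y) ^ 2) :
    BMap Nh U x = BMap Nh U y ↔
      (U 0 ⬝ᵥ (A *ᵥ U 0) = 0 ∧
        U (Nh : ZMod N) ⬝ᵥ (A *ᵥ U (Nh : ZMod N)) = 0 ∧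
        ∀ k : ℕ, 0 < k → k < Nh →
          U ((k : ZMod N)) ⬝ᵥ (A *ᵥ U ((k : ZMod N))) +
            U (-(k : ZMod N)) ⬝ᵥ (A *ᵥ U (-(k : ZMod N))) = 0) := by
  simp only [hA]
  constructor
  · intro h
    refine ⟨?_, ?_, ?_⟩
    · have := congrFun h ⟨0, by omega⟩
      simp only [BMap, if_true] at this
      linarith
    · have := congrFun h ⟨Nh, by omega⟩
      simp only [BMap, hNh.ne', if_true, if_false] at this
      linarith
    · intro k hk hk2
      have := congrFun h ⟨k, by omega⟩
      simp only [BMap, hk.ne', hk2.ne, if_false] at this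
      linarith
  · rintro ⟨h1, h2, h3⟩
    funext ⟨j, hj⟩
    simp only [BMap]
    split_ifs with a b
    · linarith
    · linarith
    · have := h3 j (by omega) (by omega)
      linarith

lemma psd_zero {M N Nh : ℕ} [NeZero N] (hN : N = 2 * Nh) (U : ZMod N → (Fin M → ℝ))
    (hU : Submodule.span ℝ (Set.range U) = ⊤)
    (A : Matrix (Fin M) (Fin M) ℝ) (hs : A.IsHermitian)
    (hA : ∀ w : Fin M → ℝ, 0 ≤ w ⬝ᵥ (A *ᵥ w))
    (h1 : U 0 ⬝ᵥ (A *ᵥ U 0) = 0)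
    (h2 : U (Nh : ZMod N) ⬝ᵥ (A *ᵥ U (Nh : ZMod N)) = 0)
    (h3 : ∀ k : ℕ, 0 < k → k < Nh →
          U ((k : ZMod N)) ⬝ᵥ (A *ᵥ U ((k : ZMod N))) +
            U (-(k : ZMod N)) ⬝ᵥ (A *ᵥ U (-(k : ZMod N))) = 0) : A = 0 := by
  have hp : A.PosSemidef := Matrix.PosSemidef.of_dotProduct_mulVec_nonneg hs (by simpa using hA)
  have h4 : ∀ a, U a ⬝ᵥ (A *ᵥ U a) = 0 := by
    intro a
    rcases zmod_cases N Nh hN a with rfl | rfl | ⟨k, hk, hk2, rfl | rfl⟩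
    · exact h1
    · exact h2
    · linarith [h3 k hk hk2, hA (U (k : ZMod N)), hA (U (-(k : ZMod N)))]
    · linarith [h3 k hk hk2, hA (U (k : ZMod N)), hA (U (-(k : ZMod N)))]
  have h5 : ∀ a, A *ᵥ U a = 0 := fun a =>
    (hp.dotProduct_mulVec_zero_iff (U a)).1 (by simpa using h4 a)
  have h6 : Matrix.mulVecLin A = 0 := by
    apply LinearMap.ext_on_range hU
    intro a
    simpa using h5 a
  ext i j
  have := congrFun (LinearMap.congr_fun h6 (Pi.single j 1)) i
  simpa using this

lemma quad_form {M : ℕ} (A : Matrix (Fin M) (Fin M) ℝ) (hs : A.IsHermitian) :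
    ∃ (V : Matrix (Fin M) (Fin M) ℝ), Vᵀ * V = 1 ∧
      ∀ w, w ⬝ᵥ (A *ᵥ w) = ∑ i, hs.eigenvalues i * ((Vᵀ *ᵥ w) i) ^ 2 := by
  refine ⟨hs.eigenvectorUnitary, ?_, ?_⟩
  · have := (Matrix.mem_unitaryGroup_iff').1 hs.eigenvectorUnitary.2
    simpa [Matrix.star_eq_conjTranspose] using this
  · intro w
    have h := hs.spectral_theorem
    rw [Unitary.conjStarAlgAut_apply] at h
    generalize hs.eigenvalues = e at *
    generalize (hs.eigenvectorUnitary : Matrix (Fin M) (Fin M) ℝ) = V at *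
    rw [h, ← Matrix.mulVec_mulVec, ← Matrix.mulVec_mulVec, Matrix.dotProduct_mulVec,
      ← Matrix.mulVec_transpose]
    simp only [Matrix.star_eq_conjTranspose, Matrix.conjTranspose_eq_transpose_of_trivial]
    simp only [dotProduct, Matrix.mulVec_diagonal]
    refine Finset.sum_congr rfl fun i _ => ?_
    simp
    ring

/-- Sign recovery from B_U fails iff a nonzero symmetric matrix of rank ≤ 2 satisfies
the system (†). -/
theorem real_lemma9 (M N Nh : ℕ) [NeZero N] (hN : N = 2 * Nh) (hNh : 0 < Nh)
    (U : ZMod N → (Fin M → ℝ))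
    (hU : Submodule.span ℝ (Set.range U) = ⊤) :
    (¬ ∀ x y : Fin M → ℝ, BMap Nh U x = BMap Nh U y → (y = x ∨ y = -x)) ↔
      ∃ A : Matrix (Fin M) (Fin M) ℝ, A ≠ 0 ∧ A.IsSymm ∧ A.rank ≤ 2 ∧
        U 0 ⬝ᵥ (A *ᵥ U 0) = 0 ∧
        U (Nh : ZMod N) ⬝ᵥ (A *ᵥ U (Nh : ZMod N)) = 0 ∧
        ∀ k : ℕ, 0 < k → k < Nh →
          U ((k : ZMod N)) ⬝ᵥ (A *ᵥ U ((k : ZMod N))) +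
            U (-(k : ZMod N)) ⬝ᵥ (A *ᵥ U (-(k : ZMod N))) = 0 := by
  constructor
  · intro h
    push Not at h
    obtain ⟨x, y, hB, h1, h2⟩ := h
    refine ⟨vecMulVec x x - vecMulVec y y, ?_, ?_, ?_, ?_⟩
    · intro h0
      have h3 : ∀ i j, x i * x j = y i * y j := by
        intro i j
        have := congrFun (congrFun h0 i) j
        simp [vecMulVec_apply] at this
        linarith
      by_cases hx : ∃ i, x i ≠ 0
      · obtain ⟨i, hi⟩ := hx
        rcases mul_self_eq_mul_self_iff.1 (h3 i i) with h4 | h4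
        · apply h1
          funext j
          have h5 := h3 i j
          rw [← h4] at h5
          exact (mul_left_cancel₀ hi h5).symm
        · apply h2
          funext j
          have h5 := h3 i j
          rw [show y i = - x i by linarith] at h5
          have h6 : x i * x j = x i * (- y j) := by linarith
          have := mul_left_cancel₀ hi h6
          simp [this]
      · push Not at hx
        apply h1
        funext j
        have := h3 j j
        rw [hx j] at this ⊢
        simpa using this.symm
    · ext i j
      simp [vecMulVec_apply, mul_comm]
    · have hPQ : vecMulVec x x - vecMulVec y y =
          (Matrix.of fun (i : Fin M) (b : Fin 2) => (![x i, y i] : Fin 2 → ℝ) b) *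
            (Matrix.of fun (b : Fin 2) (i : Fin M) => (![x i, -y i] : Fin 2 → ℝ) b) := by
        ext i j
        simp [vecMulVec_apply, Matrix.mul_apply, Fin.sum_univ_two]
        ring
      rw [hPQ]
      exact (rank_mul_le_left _ _).trans (rank_le_width _)
    · refine (bmap_iff Nh hNh U _ x y ?_).1 hB
      intro w
      simp [sub_mulVec, vecMulVec_mulVec, dotProduct_sub]
      simp [dotProduct_comm x w, dotProduct_comm y w]
      ring
  · rintro ⟨A, hA0, hAs, hr, hc⟩
    have hs : A.IsHermitian := by
      rw [Matrix.IsHermitian, Matrix.conjTranspose_eq_transpose_of_trivial]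
      exact hAs
    obtain ⟨V, hV, hq⟩ := quad_form A hs
    rw [hs.rank_eq_card_non_zero_eigs] at hr
    generalize hs.eigenvalues = e at *
    have hp : ∃ i, 0 < e i := by
      by_contra! hcon
      apply hA0
      rw [← neg_eq_zero]
      refine psd_zero hN U hU (-A) hs.neg ?_ ?_ ?_ ?_
      · intro w
        simp only [neg_mulVec, dotProduct_neg, hq]
        rw [← Finset.sum_neg_distrib]
        exact Finset.sum_nonneg fun i _ => by nlinarith [hcon i, sq_nonneg ((Vᵀ *ᵥ w) i)]
      · simpa [neg_mulVec] using hc.1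
      · simpa [neg_mulVec] using hc.2.1
      · intro k hk hk2
        have := hc.2.2 k hk hk2
        simp only [neg_mulVec, dotProduct_neg]
        linarith
    have hn : ∃ i, e i < 0 := by
      by_contra! hcon
      apply hA0
      refine psd_zero hN U hU A hs ?_ hc.1 hc.2.1 hc.2.2
      intro w
      rw [hq]
      exact Finset.sum_nonneg fun i _ => mul_nonneg (hcon i) (sq_nonneg _)
    obtain ⟨i, hi⟩ := hp
    obtain ⟨j, hj⟩ := hn
    have hij : i ≠ j := by rintro rfl; linarith
    have hz : ∀ k, k ≠ i → k ≠ j → e k = 0 := by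
      intro k hki hkj
      by_contra hk
      rw [Fintype.card_subtype] at hr
      have hsub : ({i, j, k} : Finset (Fin M)) ⊆ Finset.univ.filter (fun i => e i ≠ 0) := by
        intro l hl
        simp only [Finset.mem_insert, Finset.mem_singleton] at hl
        rcases hl with rfl | rfl | rfl
        · simp [hi.ne']
        · simp [hj.ne]
        · simp [hk]
      have h1 := Finset.card_le_card hsub
      rw [Finset.card_eq_three.2 ⟨i, j, k, hij, hki.symm, hkj.symm, rfl⟩] at h1
      omega
    have hq2 : ∀ w, w ⬝ᵥ (A *ᵥ w) = e i * ((Vᵀ *ᵥ w) i) ^ 2 + e j * ((Vᵀ *ᵥ w) j) ^ 2 := by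
      intro w
      rw [hq, ← Finset.sum_pair hij (f := fun i => e i * ((Vᵀ *ᵥ w) i) ^ 2)]
      symm
      apply Finset.sum_subset (Finset.subset_univ _)
      intro k _ hk
      simp only [Finset.mem_insert, Finset.mem_singleton, not_or] at hk
      rw [hz k hk.1 hk.2, zero_mul]
    have hdot : ∀ (c : ℝ) (l : Fin M) (w : Fin M → ℝ),
        w ⬝ᵥ (c • fun k => V k l) = c * (Vᵀ *ᵥ w) l := by
      intro c l w
      rw [dotProduct_smul, dotProduct_comm]
      rfl
    set x : Fin M → ℝ := √(e i) • fun k => V k i with hx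
    set y : Fin M → ℝ := √(-e j) • fun k => V k j with hy
    have hform : ∀ w : Fin M → ℝ, w ⬝ᵥ (A *ᵥ w) = (w ⬝ᵥ x) ^ 2 - (w ⬝ᵥ y) ^ 2 := by
      intro w
      rw [hq2, hx, hy, hdot, hdot, mul_pow, mul_pow, Real.sq_sqrt hi.le,
        Real.sq_sqrt (by linarith)]
      ring
    intro hall
    have hyx := hall x y ((bmap_iff Nh hNh U A x y hform).2 hc)
    have h0 : ∀ w : Fin M → ℝ, w ⬝ᵥ (A *ᵥ w) = 0 := by
      intro w
      rw [hform]
      rcases hyx with h | h <;> rw [h] <;> simp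
    have h1 := h0 (V *ᵥ Pi.single i 1)
    rw [hq2, mulVec_mulVec, hV] at h1
    simp [hij.symm] at h1
    linarith
end
end

section
/- Let N be even with N > 4M − 6. Then there is a nonempty Zariski-open subset of (ℝ^M)^N such that every N-element frame U = (α_0,…,α_{N−1}) on ℝ^M lying in this subset satisfies: for all x, y ∈ ℝ^M, B_U(x) = B_U(y) implies y = x or y = −x, where B_U(x) = ((α_0ᵀx)², (α_1ᵀx)² + (α_{N−1}ᵀx)², …, (α_{N/2−1}ᵀx)² + (α_{N/2+1}ᵀx)², (α_{N/2}ᵀx)²) ∈ ℝ^{N/2+1}. -/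
/-!
STATEMENT 17: For N even with N > 4M−6, a generic N-element frame U = (α_0,…,α_{N−1})
on ℝ^M satisfies: B_U(x) = B_U(y) implies y = ±x.
-/

open Matrix

noncomputable section

/-- A Zariski-open subset of (ℝ^M)^N (tuples indexed mod N). -/
def IsZariskiOpenTuples {M N : ℕ} (W : Set (ZMod N → (Fin M → ℝ))) : Prop :=
  ∃ I : Set (MvPolynomial (ZMod N × Fin M) ℝ),
    W = {α | ∃ p ∈ I, MvPolynomial.eval (fun q => α q.1 q.2) p ≠ 0}


section Helpers

/-- Vector orthogonal to `u` (with `u a = 1`) with free coordinates `w`. -/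
def perpV {R : Type*} [CommRing R] {m : ℕ} (a : Fin (m + 1)) (u : Fin (m + 1) → R)
    (w : Fin m → R) : Fin (m + 1) → R :=
  a.insertNth (α := fun _ => R) (-∑ k, w k * u (a.succAbove k)) w

/-- Vector with `a`-th coordinate one. -/
def unitV {R : Type*} [CommRing R] {m : ℕ} (a : Fin (m + 1))
    (w : Fin m → R) : Fin (m + 1) → R :=
  a.insertNth (α := fun _ => R) 1 w

theorem perpV_map {R S : Type*} [CommRing R] [CommRing S] (f : R →+* S) {m : ℕ}
    (a : Fin (m + 1)) (u : Fin (m + 1) → R) (w : Fin m → R) (i : Fin (m + 1)) :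
    f (perpV a u w i) = perpV a (fun j => f (u j)) (fun j => f (w j)) i := by
  rcases Fin.eq_self_or_eq_succAbove a i with rfl | ⟨k, rfl⟩ <;> simp [perpV]

theorem unitV_map {R S : Type*} [CommRing R] [CommRing S] (f : R →+* S) {m : ℕ}
    (a : Fin (m + 1)) (w : Fin m → R) (i : Fin (m + 1)) :
    f (unitV a w i) = unitV a (fun j => f (w j)) i := by
  rcases Fin.eq_self_or_eq_succAbove a i with rfl | ⟨k, rfl⟩ <;> simp [unitV]

theorem eq_perpV {m : ℕ} (a : Fin (m + 1)) (u w : Fin (m + 1) → ℝ) (hu : u a = 1)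
    (h : w ⬝ᵥ u = 0) : w = perpV a u (fun k => w (a.succAbove k)) := by
  rw [dotProduct, Fin.sum_univ_succAbove _ a, hu] at h
  funext i
  rcases Fin.eq_self_or_eq_succAbove a i with rfl | ⟨k, rfl⟩
  · simp [perpV]; linarith
  · simp [perpV]

theorem eq_unitV {m : ℕ} (a : Fin (m + 1)) (u : Fin (m + 1) → ℝ) (hu : u a = 1) :
    u = unitV a (fun k => u (a.succAbove k)) := by
  funext i
  rcases Fin.eq_self_or_eq_succAbove a i with rfl | ⟨k, rfl⟩
  · simp [unitV, hu]
  · simp [unitV]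

/-- Index type of the parameters. -/
abbrev PIdx (m n : ℕ) : Type :=
  ((Fin m ⊕ Fin m) ⊕ (Fin m ⊕ Fin m)) ⊕ (Fin n × ((Fin m ⊕ Fin m) ⊕ Unit))

/-- Index type of the charts. -/
abbrev CIdx (m n : ℕ) : Type :=
  (Fin (m + 1) × Fin (m + 1)) × (Bool × Bool) × (Fin n → Bool)

def chartU {R : Type*} [CommRing R] {m n : ℕ} (c : CIdx m n) (s : PIdx m n → R) :
    Fin (m + 1) → R :=
  unitV c.1.1 (fun k => s (.inl (.inl (.inl k))))

def chartV {R : Type*} [CommRing R] {m n : ℕ} (c : CIdx m n) (s : PIdx m n → R) :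
    Fin (m + 1) → R :=
  unitV c.1.2 (fun k => s (.inl (.inl (.inr k))))

def chartEnd {R : Type*} [CommRing R] {m n : ℕ} (c : CIdx m n) (e : Bool) (s : PIdx m n → R)
    (w : Fin m → R) : Fin (m + 1) → R :=
  if e then perpV c.1.1 (chartU c s) w else perpV c.1.2 (chartV c s) w

def chartP {R : Type*} [CommRing R] {m n : ℕ} (c : CIdx m n) (s : PIdx m n → R) (j : Fin n) :
    Fin (m + 1) → R := fun i =>
  if c.2.2 j then perpV c.1.1 (chartU c s) (fun k => s (.inr (j, .inl (.inl k)))) i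
  else perpV c.1.2 (chartV c s) (fun k => s (.inr (j, .inl (.inr k)))) i
    + s (.inr (j, .inr ())) * perpV c.1.1 (chartU c s) (fun k => s (.inr (j, .inl (.inl k)))) i

def chartQ {R : Type*} [CommRing R] {m n : ℕ} (c : CIdx m n) (s : PIdx m n → R) (j : Fin n) :
    Fin (m + 1) → R := fun i =>
  if c.2.2 j then perpV c.1.2 (chartV c s) (fun k => s (.inr (j, .inl (.inr k)))) i
  else perpV c.1.1 (chartU c s) (fun k => s (.inr (j, .inl (.inl k)))) i
    - s (.inr (j, .inr ())) * perpV c.1.2 (chartV c s) (fun k => s (.inr (j, .inl (.inr k)))) i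

def chart {R : Type*} [CommRing R] {m n N : ℕ} (c : CIdx m n) (s : PIdx m n → R)
    (k : ZMod N) : Fin (m + 1) → R :=
  if k.val = 0 then chartEnd c c.2.1.1 s (fun k => s (.inl (.inr (.inl k))))
  else if k.val = n + 1 then chartEnd c c.2.1.2 s (fun k => s (.inl (.inr (.inr k))))
  else if h : k.val - 1 < n then chartP c s ⟨k.val - 1, h⟩
  else if h : N - k.val - 1 < n then chartQ c s ⟨N - k.val - 1, h⟩
  else 0

theorem chart_map {R S : Type*} [CommRing R] [CommRing S] (f : R →+* S) {m n N : ℕ}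
    (c : CIdx m n) (s : PIdx m n → R) (k : ZMod N) (i : Fin (m + 1)) :
    f (chart c s k i) = chart c (fun j => f (s j)) k i := by
  unfold chart
  split_ifs
  all_goals
    try simp only [chartEnd, chartP, chartQ]
    try split_ifs
  all_goals simp [perpV_map, chartU, chartV, unitV_map]

theorem exists_relation {σ ι : Type} [Fintype σ] [Fintype ι]
    (hc : Fintype.card σ < Fintype.card ι) (F : ι → MvPolynomial σ ℝ) :
    ∃ P : MvPolynomial ι ℝ, P ≠ 0 ∧ MvPolynomial.aeval F P = 0 := by
  by_contra! hcon
  have hF : AlgebraicIndependent ℝ F := by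
    rw [algebraicIndependent_iff]
    intro p hp
    by_contra h0
    exact hcon p h0 hp
  have h1 := hF.cardinalMk_le_trdeg
  rw [MvPolynomial.trdeg_of_isDomain] at h1
  simp only [Cardinal.mk_fintype, Cardinal.lift_natCast, Nat.cast_le] at h1
  omega

theorem pair_param {m : ℕ} (a b : Fin (m + 1)) (u v p q : Fin (m + 1) → ℝ)
    (hu : u a = 1) (hv : v b = 1)
    (h : (p ⬝ᵥ u) * (p ⬝ᵥ v) + (q ⬝ᵥ u) * (q ⬝ᵥ v) = 0) :
    ∃ (e : Bool) (w z : Fin m → ℝ) (t : ℝ),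
      (p = fun i => if e then perpV a u w i else perpV b v z i + t * perpV a u w i) ∧
      (q = fun i => if e then perpV b v z i else perpV a u w i - t * perpV b v z i) := by
  by_cases h0 : p ⬝ᵥ u = 0 ∧ q ⬝ᵥ v = 0
  · refine ⟨true, fun k => p (a.succAbove k), fun k => q (b.succAbove k), 0, ?_, ?_⟩
    · simpa using eq_perpV a u p hu h0.1
    · simpa using eq_perpV b v q hv h0.2
  · obtain ⟨t, ht1, ht2⟩ : ∃ t : ℝ, (q ⬝ᵥ u) + t * (p ⬝ᵥ u) = 0 ∧
        (p ⬝ᵥ v) - t * (q ⬝ᵥ v) = 0 := by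
      by_cases hs : p ⬝ᵥ u = 0
      · have hq : q ⬝ᵥ v ≠ 0 := fun hq => h0 ⟨hs, hq⟩
        rw [hs] at h ⊢
        have hqu : q ⬝ᵥ u = 0 := by
          rcases mul_eq_zero.1 (by linarith : (q ⬝ᵥ u) * (q ⬝ᵥ v) = 0) with h | h
          · exact h
          · exact absurd h hq
        refine ⟨(p ⬝ᵥ v) / (q ⬝ᵥ v), by simp [hqu], by field_simp; simp⟩
      · refine ⟨-(q ⬝ᵥ u) / (p ⬝ᵥ u), by field_simp; simp, ?_⟩
        field_simp
        linarith
    have hpos : (1 + t ^ 2) ≠ 0 := by positivity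
    have e1 := eq_perpV a u ((1 + t ^ 2)⁻¹ • (q + t • p)) hu (by
      rw [smul_dotProduct, add_dotProduct, smul_dotProduct, smul_eq_mul, smul_eq_mul, ht1,
        mul_zero])
    have e2 := eq_perpV b v ((1 + t ^ 2)⁻¹ • (p - t • q)) hv (by
      rw [smul_dotProduct, sub_dotProduct, smul_dotProduct, smul_eq_mul, smul_eq_mul, ht2,
        mul_zero])
    refine ⟨false, fun k => ((1 + t ^ 2)⁻¹ • (q + t • p)) (a.succAbove k),
      fun k => ((1 + t ^ 2)⁻¹ • (p - t • q)) (b.succAbove k), t, ?_, ?_⟩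
    · rw [← e1, ← e2]
      funext i
      simp
      field_simp
      ring
    · rw [← e1, ← e2]
      funext i
      simp
      field_simp
      ring

theorem end_param {m : ℕ} (a b : Fin (m + 1)) (u v p : Fin (m + 1) → ℝ)
    (hu : u a = 1) (hv : v b = 1) (h : (p ⬝ᵥ u) * (p ⬝ᵥ v) = 0) :
    ∃ (e : Bool) (w : Fin m → ℝ), p = if e then perpV a u w else perpV b v w := by
  rcases mul_eq_zero.1 h with h | h
  · exact ⟨true, _, by simpa using eq_perpV a u p hu h⟩
  · exact ⟨false, _, by simpa using eq_perpV b v p hv h⟩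

/-- Every bad tuple is in the image of some chart. -/
theorem bad_param {m n N : ℕ} [NeZero N] (hN : N = 2 * (n + 1)) (U : ZMod N → Fin (m + 1) → ℝ)
    (a b : Fin (m + 1)) (u v : Fin (m + 1) → ℝ) (hu : u a = 1) (hv : v b = 1)
    (h0 : (U 0 ⬝ᵥ u) * (U 0 ⬝ᵥ v) = 0)
    (h1 : (U ((n + 1 : ℕ) : ZMod N) ⬝ᵥ u) * (U ((n + 1 : ℕ) : ZMod N) ⬝ᵥ v) = 0)
    (h2 : ∀ j : Fin n, (U ((j + 1 : ℕ) : ZMod N) ⬝ᵥ u) * (U ((j + 1 : ℕ) : ZMod N) ⬝ᵥ v) +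
      (U (-((j + 1 : ℕ) : ZMod N)) ⬝ᵥ u) * (U (-((j + 1 : ℕ) : ZMod N)) ⬝ᵥ v) = 0) :
    ∃ (c : CIdx m n) (s : PIdx m n → ℝ), U = chart c s := by
  obtain ⟨e0, w0, hw0⟩ := end_param a b u v _ hu hv h0
  obtain ⟨e1, w1, hw1⟩ := end_param a b u v _ hu hv h1
  choose e w z t hp hq using fun j => pair_param a b u v _ _ hu hv (h2 j)
  refine ⟨((a, b), (e0, e1), e), Sum.elim (Sum.elim
    (Sum.elim (fun k => u (a.succAbove k)) (fun k => v (b.succAbove k))) (Sum.elim w0 w1))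
    (fun x => Sum.elim (Sum.elim (w x.1) (z x.1)) (fun _ => t x.1) x.2), ?_⟩
  funext k
  have hk := k.val_lt
  have hkc : ((k.val : ℕ) : ZMod N) = k := ZMod.natCast_zmod_val k
  unfold chart
  split_ifs with c1 c2 c3 c4
  · have : k = 0 := by rw [← hkc, c1]; simp
    subst this
    simp only [chartEnd, chartU, chartV, Sum.elim_inl, Sum.elim_inr]
    rw [← eq_unitV a u hu, ← eq_unitV b v hv]
    exact hw0
  · have : k = ((n + 1 : ℕ) : ZMod N) := by rw [← hkc, c2]
    rw [this]
    simp only [chartEnd, chartU, chartV, Sum.elim_inl, Sum.elim_inr]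
    rw [← eq_unitV a u hu, ← eq_unitV b v hv]
    exact hw1
  · have : k = (((⟨k.val - 1, c3⟩ : Fin n) + 1 : ℕ) : ZMod N) := by
      conv_lhs => rw [← hkc]
      congr 1
      simp only
      omega
    conv_lhs => rw [this, hp]
    unfold chartP
    simp only [chartU, chartV, Sum.elim_inl, Sum.elim_inr]
    rw [← eq_unitV a u hu, ← eq_unitV b v hv]
  · have : k = -(((⟨N - k.val - 1, c4⟩ : Fin n) + 1 : ℕ) : ZMod N) := by
      have e : ((⟨N - k.val - 1, c4⟩ : Fin n) + 1 : ℕ) = N - k.val := by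
        simp only
        omega
      rw [e, Nat.cast_sub hk.le, hkc]
      simp
    conv_lhs => rw [this, hq]
    unfold chartQ
    simp only [chartU, chartV, Sum.elim_inl, Sum.elim_inr]
    rw [← eq_unitV a u hu, ← eq_unitV b v hv]
  · omega

theorem sq_diff {m : ℕ} (p x y : Fin m → ℝ) :
    (p ⬝ᵥ (x + y)) * (p ⬝ᵥ (x - y)) = (p ⬝ᵥ x) ^ 2 - (p ⬝ᵥ y) ^ 2 := by
  rw [dotProduct_add, dotProduct_sub]; ring

end Helpers

/-- If N is even and N > 4M−6 then there is a nonempty Zariski-open subset of (ℝ^M)^N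
such that every frame in it has the sign-recovery property for B_U. -/
theorem generic_frame_real (M N Nh : ℕ) [NeZero N] (hN : N = 2 * Nh) (hNh : 0 < Nh)
    (h : (N : ℤ) > 4 * (M : ℤ) - 6) :
    ∃ W : Set (ZMod N → (Fin M → ℝ)),
      IsZariskiOpenTuples W ∧ W.Nonempty ∧
      ∀ U ∈ W, Submodule.span ℝ (Set.range U) = ⊤ →
        ∀ x y : Fin M → ℝ, BMap Nh U x = BMap Nh U y → (y = x ∨ y = -x) := by
  obtain ⟨n, rfl⟩ : ∃ n, Nh = n + 1 := ⟨Nh - 1, by omega⟩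
  rcases M with _ | m
  · refine ⟨Set.univ, ⟨{1}, by simp⟩, Set.univ_nonempty, ?_⟩
    intro U _ _ x y _
    exact Or.inl (Subsingleton.elim _ _)
  have hcard : Fintype.card (PIdx m n) < Fintype.card (ZMod N × Fin (m + 1)) := by
    simp only [Fintype.card_sum, Fintype.card_prod, Fintype.card_fin, Fintype.card_unit,
      ZMod.card]
    subst hN
    push_cast at h
    have : 2 * m < n + 2 := by omega
    nlinarith
  choose P hP0 hP using fun c : CIdx m n => exists_relation hcard
    (fun q => chart (R := MvPolynomial (PIdx m n) ℝ) c MvPolynomial.X q.1 q.2)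
  have hprod : ∏ c, P c ≠ 0 := Finset.prod_ne_zero_iff.2 fun c _ => hP0 c
  refine ⟨_, ⟨{∏ c, P c}, rfl⟩, ?_, ?_⟩
  · by_contra hne
    rw [Set.not_nonempty_iff_eq_empty, Set.eq_empty_iff_forall_notMem] at hne
    apply hprod
    apply MvPolynomial.funext
    intro s
    by_contra hs
    exact hne (fun k i => s (k, i)) ⟨_, rfl, by simpa using hs⟩
  · rintro U ⟨p, hp, hU⟩ _ x y hxy
    rw [Set.mem_singleton_iff] at hp
    subst hp
    by_contra! hcon
    have hu : x + y ≠ 0 := fun h0 => hcon.2 (eq_neg_of_add_eq_zero_right h0)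
    have hv : x - y ≠ 0 := fun h0 => hcon.1 (sub_eq_zero.1 h0).symm
    obtain ⟨a, ha⟩ := Function.ne_iff.1 hu
    obtain ⟨b, hb⟩ := Function.ne_iff.1 hv
    rw [Pi.zero_apply] at ha hb
    have g0 : (U 0 ⬝ᵥ (x + y)) * (U 0 ⬝ᵥ (x - y)) = 0 := by
      have := congrFun hxy ⟨0, by omega⟩
      simp only [BMap, if_true] at this
      rw [sq_diff, this, sub_self]
    have g1 : (U ((n + 1 : ℕ) : ZMod N) ⬝ᵥ (x + y)) * (U ((n + 1 : ℕ) : ZMod N) ⬝ᵥ (x - y)) = 0 := by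
      have := congrFun hxy ⟨n + 1, by omega⟩
      simp only [BMap, if_true, if_neg (Nat.succ_ne_zero n)] at this
      rw [sq_diff, this, sub_self]
    have g2 : ∀ j : Fin n,
        (U ((j + 1 : ℕ) : ZMod N) ⬝ᵥ (x + y)) * (U ((j + 1 : ℕ) : ZMod N) ⬝ᵥ (x - y)) +
        (U (-((j + 1 : ℕ) : ZMod N)) ⬝ᵥ (x + y)) * (U (-((j + 1 : ℕ) : ZMod N)) ⬝ᵥ (x - y)) = 0 := by
      intro j
      have hj := j.isLt
      have := congrFun hxy ⟨j + 1, by omega⟩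
      simp only [BMap, if_neg (Nat.succ_ne_zero (j : ℕ)),
        if_neg (by omega : ¬ ((j : ℕ) + 1 = n + 1))] at this
      rw [sq_diff, sq_diff]
      linarith
    obtain ⟨c, s, hcs⟩ := bad_param hN U a b (((x + y) a)⁻¹ • (x + y)) (((x - y) b)⁻¹ • (x - y))
      (by rw [Pi.smul_apply, smul_eq_mul, inv_mul_cancel₀ ha])
      (by rw [Pi.smul_apply, smul_eq_mul, inv_mul_cancel₀ hb])
      (by simp only [dotProduct_smul, smul_eq_mul]
          linear_combination ((x + y) a)⁻¹ * ((x - y) b)⁻¹ * g0)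
      (by simp only [dotProduct_smul, smul_eq_mul]
          linear_combination ((x + y) a)⁻¹ * ((x - y) b)⁻¹ * g1)
      (by intro j
          simp only [dotProduct_smul, smul_eq_mul]
          linear_combination ((x + y) a)⁻¹ * ((x - y) b)⁻¹ * g2 j)
    apply hU
    rw [map_prod]
    apply Finset.prod_eq_zero (Finset.mem_univ c)
    have key := congrArg (MvPolynomial.eval s) (hP c)
    rw [map_zero, MvPolynomial.aeval_def, MvPolynomial.eval₂_eq_eval_map] at key
    rw [← key, ← MvPolynomial.eval₂_eq_eval_map, MvPolynomial.hom_eval₂]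
    have e1 : (MvPolynomial.eval s).comp (algebraMap ℝ (MvPolynomial (PIdx m n) ℝ))
        = RingHom.id ℝ := by
      ext; simp
    rw [e1, MvPolynomial.eval₂_id]
    congr 2
    funext q
    try simp only [Function.comp]
    rw [hcs, chart_map]
    simp
end
end

section
/- Fix M, N, s with 0 ≤ s ≤ M, N even, and N > 4M − 4. Then there is a nonempty Zariski-open subset of the parameter space of pairs of s-overlapping N-element frames on ℝ^M such that for every pair (U,V) = ((α_0,…,α_{N−1}),(β_0,…,β_{N−1})) in this subset, there is no pair (A,B) of distinct rank-one real symmetric M×M matrices satisfying α_0ᵀ A α_0 = β_0ᵀ B β_0, α_{N/2}ᵀ A α_{N/2} = β_{N/2}ᵀ B β_{N/2}, and α_kᵀ A α_k + α_{N−k}ᵀ A α_{N−k} = β_kᵀ B β_k + β_{N−k}ᵀ B β_{N−k} for all k = 1,…,N/2 − 1. -/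
/-!
STATEMENT 18: For 0 ≤ s ≤ M, N even, N > 4M−4: a generic pair of s-overlapping
N-element frames on ℝ^M admits no pair (A,B) of distinct rank-one real symmetric
matrices satisfying the system of equations (★) coming from the map B_{UV}.
-/

open Matrix

noncomputable section

/-- Row space of a real M×N matrix (columns indexed mod N); this is the image of the
frame map L_U. -/
def rowSpanR {M N : ℕ} [NeZero N] (B : Matrix (Fin M) (ZMod N) ℝ) :
    Submodule ℝ (ZMod N → ℝ) :=
  Submodule.span ℝ (Set.range fun i => B i)

/-- The parameter space of pairs of s-overlapping N-element frames on ℝ^M: both frame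
matrices have full rank M, their first s rows agree, and the intersection of the images
of the frame maps has dimension exactly s. -/
def IsSOverlappingPairR {M N : ℕ} [NeZero N] (s : ℕ)
    (p : Matrix (Fin M) (ZMod N) ℝ × Matrix (Fin M) (ZMod N) ℝ) : Prop :=
  p.1.rank = M ∧ p.2.rank = M ∧
  (∀ i : Fin M, (i : ℕ) < s → p.1 i = p.2 i) ∧
  Module.finrank ℝ ↥(rowSpanR p.1 ⊓ rowSpanR p.2) = s

/-- A Zariski-open subset of the space of pairs of real M×N matrices. -/
def IsZariskiOpenPairR {M N : ℕ}
    (W : Set (Matrix (Fin M) (ZMod N) ℝ × Matrix (Fin M) (ZMod N) ℝ)) : Prop :=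
  ∃ I : Set (MvPolynomial ((Fin M × ZMod N) ⊕ (Fin M × ZMod N)) ℝ),
    W = {p | ∃ q ∈ I, MvPolynomial.eval
      (Sum.elim (fun a => p.1 a.1 a.2) (fun a => p.2 a.1 a.2)) q ≠ 0}

/-- The system of equations (★) relating the frames (α_n), (β_n) (the columns of the two
frame matrices) and the symmetric matrices A, B (N = 2·Nh):
α_0ᵀAα_0 = β_0ᵀBβ_0, α_{N/2}ᵀAα_{N/2} = β_{N/2}ᵀBβ_{N/2}, and
α_kᵀAα_k + α_{N−k}ᵀAα_{N−k} = β_kᵀBβ_k + β_{N−k}ᵀBβ_{N−k} for k = 1,…,N/2−1. -/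
def SatisfiesSystem {M N : ℕ} [NeZero N] (Nh : ℕ)
    (P Q : Matrix (Fin M) (ZMod N) ℝ) (A B : Matrix (Fin M) (Fin M) ℝ) : Prop :=
  (fun i => P i 0) ⬝ᵥ (A *ᵥ fun i => P i 0) = (fun i => Q i 0) ⬝ᵥ (B *ᵥ fun i => Q i 0) ∧
  (fun i => P i (Nh : ZMod N)) ⬝ᵥ (A *ᵥ fun i => P i (Nh : ZMod N)) =
    (fun i => Q i (Nh : ZMod N)) ⬝ᵥ (B *ᵥ fun i => Q i (Nh : ZMod N)) ∧
  ∀ k : ℕ, 0 < k → k < Nh →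
    (fun i => P i (k : ZMod N)) ⬝ᵥ (A *ᵥ fun i => P i (k : ZMod N)) +
      (fun i => P i (-(k : ZMod N))) ⬝ᵥ (A *ᵥ fun i => P i (-(k : ZMod N))) =
    (fun i => Q i (k : ZMod N)) ⬝ᵥ (B *ᵥ fun i => Q i (k : ZMod N)) +
      (fun i => Q i (-(k : ZMod N))) ⬝ᵥ (B *ᵥ fun i => Q i (-(k : ZMod N)))


lemma exists_hull {K : Type} [Field K] [Algebra ℝ K] (T : Finset K) :
    ∃ S : Subalgebra ℝ K, (∀ t ∈ T, t ∈ S) ∧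
      (∀ t g b c : K, g ∈ S → b ∈ S → c ∈ S → g ≠ 0 → t ^ 2 * g + t * b + c = 0 → t ∈ S) ∧
      (∀ (ι : Type) [Fintype ι] (x : ι → K), AlgebraicIndependent ℝ x → (∀ i, x i ∈ S) →
        Fintype.card ι ≤ T.card) := by
  classical
  have hfl := (AlgebraicIndependent.matroid ℝ K).isFlat_closure (T : Set K)
  rw [AlgebraicIndependent.matroid_isFlat_iff] at hfl
  obtain ⟨S, hS, hcl⟩ := hfl
  refine ⟨S, ?_, ?_, ?_⟩
  · intro t ht
    have : (T : Set K) ⊆ (AlgebraicIndependent.matroid ℝ K).closure (T : Set K) :=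
      Matroid.subset_closure _ _ (by simp)
    rw [← hS] at this
    exact this ht
  · intro t g b c hg hb hc hg0 h
    have : t ∈ (S : Set K) := by
      rw [hS]
      apply hcl
      refine ⟨Polynomial.C (⟨g, hg⟩ : S) * Polynomial.X ^ 2 + Polynomial.C (⟨b, hb⟩ : S) * Polynomial.X
        + Polynomial.C (⟨c, hc⟩ : S), ?_, ?_⟩
      · intro h0
        have := congrArg (fun p => Polynomial.coeff p 2) h0
        simp at this
        exact hg0 (congrArg Subtype.val this)
      · simp
        rw [← h]
        change g * t ^ 2 + b * t + c = _
        ring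
    exact this
  · intro ι _ x hx hxS
    have hI : (AlgebraicIndependent.matroid ℝ K).Indep (Set.range x) := by
      rw [AlgebraicIndependent.matroid_indep_iff]
      exact AlgebraicIndependent.coe_range hx
    have h1 := hI.encard_le_eRk_of_subset (X := (AlgebraicIndependent.matroid ℝ K).closure (T : Set K))
      (by rw [← hS]; rintro _ ⟨i, rfl⟩; exact hxS i)
    rw [Matroid.eRk_closure_eq] at h1
    have h2 := h1.trans (Matroid.eRk_le_encard _ _)
    rw [← Set.image_univ, hx.injective.encard_image, Set.encard_coe_eq_coe_finsetCard] at h2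
    simpa using h2

/-- A nonzero symmetric matrix takes a nonzero value at a vector of `S` with a coordinate 1. -/
lemma exists_anis {K κ : Type} [Field K] [CharZero K] [Fintype κ] [DecidableEq κ]
    (C : Matrix κ κ K) (hC : C.IsSymm) (h0 : C ≠ 0) :
    ∃ (i : κ) (e : κ → K), e i = 1 ∧ (∀ j, e j = 0 ∨ e j = 1) ∧ e ⬝ᵥ (C *ᵥ e) ≠ 0 := by
  by_cases hd : ∃ i, C i i ≠ 0
  · obtain ⟨i, hi⟩ := hd
    refine ⟨i, Pi.single i 1, by simp, ?_, by simpa using hi⟩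
    intro j
    by_cases h : j = i
    · subst h; simp
    · simp [h]
  · push Not at hd
    have : ∃ i j, C i j ≠ 0 := by
      by_contra! hh
      exact h0 (by ext i j; exact hh i j)
    obtain ⟨i, j, hij⟩ := this
    have hne : i ≠ j := by rintro rfl; exact hij (hd i)
    refine ⟨i, Pi.single i 1 + Pi.single j 1, by simp [hne], ?_, ?_⟩
    · intro l
      by_cases h : l = i
      · subst h; simp [hne]
      · by_cases h' : l = j
        · subst h'; simp [h]
        · simp [h, h']
    · have hs : C j i = C i j := hC.apply i j
      simp [Matrix.mulVec_add, add_dotProduct, dotProduct_add, hd, hs]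
      exact hij

lemma quad_expand {K κ : Type} [Field K] [Fintype κ] (C : Matrix κ κ K) (t : K) (e g : κ → K) :
    (t • e + g) ⬝ᵥ (C *ᵥ (t • e + g)) =
      t ^ 2 * (e ⬝ᵥ (C *ᵥ e)) + t * (e ⬝ᵥ (C *ᵥ g) + g ⬝ᵥ (C *ᵥ e)) + g ⬝ᵥ (C *ᵥ g) := by
  simp only [Matrix.mulVec_add, Matrix.mulVec_smul, add_dotProduct, dotProduct_add,
    smul_dotProduct, dotProduct_smul, smul_eq_mul]
  ring

lemma quad_mem {K κ : Type} [Field K] [Algebra ℝ K] [Fintype κ] (S : Subalgebra ℝ K)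
    (C : Matrix κ κ K) (hC : ∀ i j, C i j ∈ S) (u v : κ → K) (hu : ∀ i, u i ∈ S)
    (hv : ∀ i, v i ∈ S) : u ⬝ᵥ (C *ᵥ v) ∈ S :=
  sum_mem fun i _ => mul_mem (hu i) (sum_mem fun j _ => mul_mem (hC i j) (hv j))

lemma core {K κ ν : Type} [Field K] [Algebra ℝ K] [Fintype κ] [DecidableEq κ]
    [Fintype ν] [DecidableEq ν] (c : κ × ν → K) (hc : AlgebraicIndependent ℝ c)
    (T : Finset K) (C : Matrix κ κ K) (hCs : C.IsSymm) (hC0 : C ≠ 0)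
    (hCT : ∀ S : Subalgebra ℝ K, (∀ t ∈ T, t ∈ S) → ∀ i j, C i j ∈ S)
    (H : Finset ν) (r : ν → ℝ) (τ : ν → ν) (hr : ∀ n ∈ H, r n = 0 ∨ τ n ∉ H)
    (heq : ∀ n ∈ H, (fun i => c (i, n)) ⬝ᵥ (C *ᵥ fun i => c (i, n)) +
      algebraMap ℝ K (r n) * ((fun i => c (i, τ n)) ⬝ᵥ (C *ᵥ fun i => c (i, τ n))) = 0) :
    H.card ≤ T.card := by
  classical
  have : CharZero K := charZero_of_injective_algebraMap (algebraMap ℝ K).injective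
  obtain ⟨i₀, e, hei, he, hQ⟩ := exists_anis C hCs hC0
  let D : Finset (κ × ν) := Finset.univ \ (H.image fun n => (i₀, n))
  let g : κ × ν → K := fun p => if p.2 ∈ H then c p - e p.1 * c (i₀, p.2) else c p
  obtain ⟨S, hTS, hquad, hcard⟩ := exists_hull (T ∪ D.image g)
  have hCS := hCT S (fun t ht => hTS t (by simp [ht]))
  have heS : ∀ j, e j ∈ S := fun j => by
    rcases he j with h | h <;> rw [h]
    exacts [zero_mem _, one_mem _]
  have hgS : ∀ p, g p ∈ S := by
    rintro ⟨l, n⟩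
    by_cases hp : (l, n) ∈ D
    · exact hTS _ (Finset.mem_union_right _ (Finset.mem_image_of_mem _ hp))
    · have : n ∈ H ∧ i₀ = l := by simpa [D] using hp
      obtain ⟨hn, rfl⟩ := this
      have : g (i₀, n) = 0 := by simp [g, hn, hei]
      rw [this]; exact zero_mem _
  have hoff : ∀ l n, n ∉ H → c (l, n) ∈ S := fun l n hn => by
    have := hgS (l, n)
    simpa [g, hn] using this
  have hon : ∀ n ∈ H, c (i₀, n) ∈ S := by
    intro n hn
    have hdec : (fun i => c (i, n)) = c (i₀, n) • e + fun i => g (i, n) := by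
      ext i; simp [g, hn]; ring
    have h1 := heq n hn
    rw [hdec, quad_expand, add_assoc] at h1
    refine hquad _ _ _ _ (quad_mem S C hCS e e heS heS) ?_ ?_ hQ h1
    · exact add_mem (quad_mem S C hCS _ _ heS fun i => hgS _)
        (quad_mem S C hCS _ _ (fun i => hgS _) heS)
    · refine add_mem (quad_mem S C hCS _ _ (fun i => hgS _) fun i => hgS _) ?_
      rcases hr n hn with h | h
      · simp [h]
      · exact mul_mem (S.algebraMap_mem _)
          (quad_mem S C hCS _ _ (fun i => hoff _ _ h) fun i => hoff _ _ h)
  have hall : ∀ p, c p ∈ S := by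
    rintro ⟨l, n⟩
    by_cases hn : n ∈ H
    · have h1 := hgS (l, n)
      have h2 : c (l, n) = g (l, n) + e l * c (i₀, n) := by simp [g, hn]
      rw [h2]
      exact add_mem h1 (mul_mem (heS l) (hon n hn))
    · exact hoff l n hn
  have h1 := hcard _ c hc hall
  have h2 : D.card + H.card = Fintype.card (κ × ν) := by
    have : (H.image fun n => (i₀, n)).card = H.card :=
      Finset.card_image_of_injective _ (fun a b h => by simpa using h)
    rw [← this, Finset.card_sdiff_add_card_eq_card (Finset.subset_univ _), Finset.card_univ]
  have h3 := (Finset.card_union_le T (D.image g)).trans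
    (Nat.add_le_add_left (Finset.card_image_le (s := D) (f := g)) _)
  omega

/-- Normalising a vector: after scaling it lies in an algebra generated by `card - 1` elements. -/
lemma normalise {K μ : Type} [Field K] [Algebra ℝ K] [Fintype μ] [DecidableEq μ]
    (x : μ → K) (i : μ) (hi : x i ≠ 0) :
    ∃ T : Finset K, T.card + 1 ≤ Fintype.card μ ∧
      ∀ S : Subalgebra ℝ K, (∀ t ∈ T, t ∈ S) → ∀ j, x j / x i ∈ S := by
  classical
  refine ⟨(Finset.univ.erase i).image fun j => x j / x i, ?_, ?_⟩
  · have h1 := Finset.card_image_le (s := Finset.univ.erase i) (f := fun j => x j / x i)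
    have h2 := Finset.card_erase_add_one (Finset.mem_univ i)
    rw [Finset.card_univ] at h2
    omega
  · intro S hS j
    by_cases h : j = i
    · subst h; rw [div_self hi]; exact one_mem _
    · exact hS _ (Finset.mem_image_of_mem _ (by simp [h]))

lemma core2 {K κ ν μ : Type} [Field K] [Algebra ℝ K] [Fintype κ] [DecidableEq κ]
    [Fintype ν] [DecidableEq ν] [Fintype μ] [DecidableEq μ]
    (c : κ × ν → K) (hc : AlgebraicIndependent ℝ c)
    (π : κ → μ) (f₁ f₂ : κ → ℝ) (a b : K) (x y : μ → K) (ha : ∃ i, a * x i ≠ 0)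
    (C : Matrix κ κ K)
    (hC : ∀ i j, C i j = a * (algebraMap ℝ K (f₁ i) * x (π i)) * (algebraMap ℝ K (f₁ j) * x (π j))
      - b * (algebraMap ℝ K (f₂ i) * y (π i)) * (algebraMap ℝ K (f₂ j) * y (π j)))
    (hC0 : C ≠ 0)
    (H : Finset ν) (r : ν → ℝ) (τ : ν → ν) (hr : ∀ n ∈ H, r n = 0 ∨ τ n ∉ H)
    (heq : ∀ n ∈ H, (fun i => c (i, n)) ⬝ᵥ (C *ᵥ fun i => c (i, n)) +
      algebraMap ℝ K (r n) * ((fun i => c (i, τ n)) ⬝ᵥ (C *ᵥ fun i => c (i, τ n))) = 0) :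
    H.card + 1 ≤ 2 * Fintype.card μ := by
  classical
  obtain ⟨i, hi⟩ := ha
  have ha0 : a ≠ 0 := left_ne_zero_of_mul hi
  have hx0 : x i ≠ 0 := right_ne_zero_of_mul hi
  obtain ⟨T₁, hT₁, hxT⟩ := normalise x i hx0
  have hy : ∃ (T₂ : Finset K) (b' : K) (z : μ → K), T₂.card + 1 ≤ Fintype.card μ ∧
      (∀ S : Subalgebra ℝ K, (∀ t ∈ T₂, t ∈ S) → ∀ j, z j ∈ S) ∧
      ∀ j l, (a * x i ^ 2)⁻¹ * (b * y j * y l) = b' * z j * z l := by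
    by_cases h : ∃ j, y j ≠ 0
    · obtain ⟨j, hj⟩ := h
      obtain ⟨T₂, hT₂, hyT⟩ := normalise y j hj
      refine ⟨T₂, (a * x i ^ 2)⁻¹ * b * y j ^ 2, fun l => y l / y j, hT₂, hyT, ?_⟩
      intro k l
      field_simp
    · push Not at h
      refine ⟨∅, 0, 0, ?_, ?_, ?_⟩
      · have := Fintype.card_pos_iff.mpr ⟨i⟩
        simpa using Nat.succ_le_of_lt this
      · intro S _ j; exact zero_mem _
      · intro j l; simp [h]
  obtain ⟨T₂, b', z, hT₂, hzT, hz⟩ := hy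
  have hC' : ∀ k l, ((a * x i ^ 2)⁻¹ • C) k l =
      (algebraMap ℝ K (f₁ k) * (x (π k) / x i)) * (algebraMap ℝ K (f₁ l) * (x (π l) / x i))
      - b' * (algebraMap ℝ K (f₂ k) * z (π k)) * (algebraMap ℝ K (f₂ l) * z (π l)) := by
    intro k l
    have h1 := hz (π k) (π l)
    have h2 : b' * (algebraMap ℝ K (f₂ k) * z (π k)) * (algebraMap ℝ K (f₂ l) * z (π l)) =
      algebraMap ℝ K (f₂ k) * algebraMap ℝ K (f₂ l) * (b' * z (π k) * z (π l)) := by ring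
    rw [h2, ← h1, Matrix.smul_apply, hC, smul_eq_mul]
    field_simp
  have key := core c hc (insert b' (T₁ ∪ T₂)) ((a * x i ^ 2)⁻¹ • C) ?_ ?_ ?_ H r τ hr ?_
  · have h1 := Finset.card_insert_le b' (T₁ ∪ T₂)
    have h2 := Finset.card_union_le T₁ T₂
    omega
  · ext k l
    rw [Matrix.transpose_apply, hC', hC']; ring
  · exact smul_ne_zero (inv_ne_zero (mul_ne_zero ha0 (pow_ne_zero _ hx0))) hC0
  · intro S hS k l
    rw [hC']
    have e1 := hxT S fun t ht => hS t (by simp [ht])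
    have e2 := hzT S fun t ht => hS t (by simp [ht])
    have e3 := hS b' (by simp)
    exact sub_mem (mul_mem (mul_mem (S.algebraMap_mem _) (e1 _)) (mul_mem (S.algebraMap_mem _) (e1 _)))
      (mul_mem (mul_mem e3 (mul_mem (S.algebraMap_mem _) (e2 _))) (mul_mem (S.algebraMap_mem _) (e2 _)))
  · intro n hn
    have := heq n hn
    simp only [Matrix.smul_mulVec, dotProduct_smul, smul_eq_mul]
    linear_combination (a * x i ^ 2)⁻¹ * this

/-- The matrix of the quadratic form `a (x̂ · c)² - b (ŷ · c)²`. -/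
def formMat {κ μ : Type} (π : κ → μ) (f₁ f₂ : κ → ℝ) (a b : ℝ) (x y : μ → ℝ) : Matrix κ κ ℝ :=
  Matrix.of fun i j => a * (f₁ i * x (π i)) * (f₁ j * x (π j)) - b * (f₂ i * y (π i)) * (f₂ j * y (π j))

/-- A bad tuple of parameters. -/
structure BadData {κ ν μ : Type} [Fintype κ] (π : κ → μ) (f₁ f₂ : κ → ℝ) (H : Finset ν)
    (r : ν → ℝ) (τ : ν → ν) where
  c : κ × ν → ℝ
  a : ℝ
  b : ℝ
  x : μ → ℝ
  y : μ → ℝ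
  ha : ∃ i, a * x i ≠ 0
  hC : ∃ i j, formMat π f₁ f₂ a b x y i j ≠ 0
  heq : ∀ n ∈ H, (fun i => c (i, n)) ⬝ᵥ (formMat π f₁ f₂ a b x y *ᵥ fun i => c (i, n)) +
      r n * ((fun i => c (i, τ n)) ⬝ᵥ (formMat π f₁ f₂ a b x y *ᵥ fun i => c (i, τ n))) = 0

lemma exists_ne_of_sq {X ι K : Type} [Fintype ι] [Field K] (φ : (X → ℝ) →+* K)
    (f : ι → X → ℝ) (hf : ∀ t, ∃ i, f i t ≠ 0) : ∃ i, φ (f i) ≠ 0 := by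
  by_contra! h
  have h1 : IsUnit (∑ i, f i * f i) := by
    rw [Pi.isUnit_iff]
    intro t
    rw [isUnit_iff_ne_zero]
    obtain ⟨i, hi⟩ := hf t
    have : 0 < ∑ i, f i t * f i t :=
      Finset.sum_pos' (fun i _ => mul_self_nonneg _) ⟨i, Finset.mem_univ _, mul_self_pos.mpr hi⟩
    simpa [Finset.sum_apply] using this.ne'
  have h2 := (h1.map φ).ne_zero
  simp [h] at h2

lemma poly_exists {κ ν μ : Type} [Fintype κ] [DecidableEq κ] [Fintype ν] [DecidableEq ν]
    [Fintype μ] [DecidableEq μ] (π : κ → μ) (f₁ f₂ : κ → ℝ) (H : Finset ν)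
    (r : ν → ℝ) (τ : ν → ν) (hr : ∀ n ∈ H, r n = 0 ∨ τ n ∉ H)
    (hH : 2 * Fintype.card μ ≤ H.card) :
    ∃ q : MvPolynomial (κ × ν) ℝ, q ≠ 0 ∧
      ∀ d : BadData π f₁ f₂ H r τ, MvPolynomial.eval d.c q = 0 := by
  by_contra! hcon
  let X := BadData π f₁ f₂ H r τ
  let cf : κ × ν → X → ℝ := fun p d => d.c p
  have hev : ∀ (q : MvPolynomial (κ × ν) ℝ) (d : X),
      MvPolynomial.aeval cf q d = MvPolynomial.eval d.c q := by
    intro q d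
    have h1 : (Pi.evalAlgHom ℝ (fun _ : X => ℝ) d) (MvPolynomial.aeval cf q) =
        MvPolynomial.aeval (fun p => cf p d) q := by
      rw [← AlgHom.comp_apply, MvPolynomial.comp_aeval]; rfl
    simpa [MvPolynomial.aeval_eq_eval] using h1
  let S : Submonoid (X → ℝ) := (nonZeroDivisors (MvPolynomial (κ × ν) ℝ)).map
    (MvPolynomial.aeval (R := ℝ) cf)
  have hS0 : Disjoint ((⊥ : Ideal (X → ℝ)) : Set (X → ℝ)) S := by
    rw [Set.disjoint_left]
    rintro f hf ⟨q, hq, rfl⟩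
    obtain ⟨d, hd⟩ := hcon q (nonZeroDivisors.ne_zero hq)
    apply hd
    rw [← hev]
    have : MvPolynomial.aeval cf q = 0 := by simpa using hf
    rw [this]; rfl
  obtain ⟨P, hP, -, hPS⟩ := Ideal.exists_le_prime_disjoint _ S hS0
  let K := P.ResidueField
  let φ : (X → ℝ) →ₐ[ℝ] K := IsScalarTower.toAlgHom ℝ (X → ℝ) K
  have hind : AlgebraicIndependent ℝ (fun p => φ (cf p)) := by
    rw [algebraicIndependent_iff]
    intro q hq
    by_contra hq0
    have h1 : MvPolynomial.aeval (fun p => φ (cf p)) q = φ (MvPolynomial.aeval cf q) := by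
      rw [← AlgHom.comp_apply, MvPolynomial.comp_aeval]
    rw [h1] at hq
    have h2 : MvPolynomial.aeval cf q ∈ P := Ideal.algebraMap_residueField_eq_zero.mp hq
    exact Set.disjoint_left.mp hPS h2 ⟨q, mem_nonZeroDivisors_of_ne_zero hq0, rfl⟩
  have hcst : ∀ u : ℝ, φ (fun _ => u) = algebraMap ℝ K u := fun u => φ.commutes u
  let CR : κ → κ → X → ℝ := fun i j d => formMat π f₁ f₂ d.a d.b d.x d.y i j
  have hQ : ∀ n, φ (fun d => (fun i => d.c (i, n)) ⬝ᵥ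
      (formMat π f₁ f₂ d.a d.b d.x d.y *ᵥ fun i => d.c (i, n))) =
      (fun i => φ (cf (i, n))) ⬝ᵥ ((Matrix.of fun i j => φ (CR i j)) *ᵥ fun i => φ (cf (i, n))) := by
    intro n
    have : (fun d : X => (fun i => d.c (i, n)) ⬝ᵥ
      (formMat π f₁ f₂ d.a d.b d.x d.y *ᵥ fun i => d.c (i, n))) =
      ∑ i, cf (i, n) * ∑ j, CR i j * cf (j, n) := by
      funext d
      simp [dotProduct, Matrix.mulVec, Finset.sum_apply, cf, CR]
    rw [this]
    simp [dotProduct, Matrix.mulVec]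
  have key := core2 (K := K) (fun p => φ (cf p)) hind π f₁ f₂ (φ fun d => d.a) (φ fun d => d.b)
    (fun i => φ fun d => d.x i) (fun i => φ fun d => d.y i) ?_
    (Matrix.of fun i j => φ (CR i j)) ?_ ?_ H r τ hr ?_
  · omega
  · obtain ⟨i, hi⟩ := exists_ne_of_sq φ.toRingHom (fun (i : μ) (d : X) => d.a * d.x i) (fun d => d.ha)
    refine ⟨i, ?_⟩
    rw [← map_mul]
    exact hi
  · intro i j
    have : CR i j = (fun d => d.a) * ((fun _ => f₁ i) * (fun d => d.x (π i))) *
       ((fun _ => f₁ j) * (fun d => d.x (π j))) - (fun d => d.b) * ((fun _ => f₂ i) * (fun d => d.y (π i))) *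
       ((fun _ => f₂ j) * (fun d => d.y (π j))) := by
      funext d; simp [CR, formMat]
    rw [Matrix.of_apply, this]
    simp only [map_sub, map_mul, hcst]
  · obtain ⟨⟨i, j⟩, hi⟩ := exists_ne_of_sq φ.toRingHom (fun (p : κ × κ) (d : X) => CR p.1 p.2 d)
      (fun d => by obtain ⟨i, j, h⟩ := d.hC; exact ⟨(i, j), h⟩)
    intro h0
    exact hi (congrFun (congrFun h0 i) j)
  · intro n hn
    rw [← hQ n, ← hQ (τ n), ← hcst, ← map_mul, ← map_add]
    rw [← map_zero φ]
    congr 1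
    funext d
    exact d.heq n hn

lemma rank_one_form {M : ℕ} (A : Matrix (Fin M) (Fin M) ℝ) (hA : A.IsSymm) (h : A.rank = 1) :
    ∃ (a : ℝ) (x : Fin M → ℝ), (∀ i j, A i j = a * x i * x j) ∧ ∃ i, a * x i ≠ 0 := by
  have hne : ∃ i j, A i j ≠ 0 := by
    by_contra! hh
    have : A = 0 := by ext i j; exact hh i j
    rw [this, Matrix.rank_zero] at h
    exact zero_ne_one h
  rw [Matrix.rank, finrank_eq_one_iff'] at h
  obtain ⟨⟨v, hv⟩, hv0, hw⟩ := h
  have hw' : ∀ j, ∃ t : ℝ, ∀ i, A i j = t * v i := by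
    intro j
    obtain ⟨t, ht⟩ := hw ⟨A.mulVecLin (Pi.single j 1), LinearMap.mem_range_self _ _⟩
    refine ⟨t, fun i => ?_⟩
    have := congrFun (congrArg Subtype.val ht) i
    simpa using this.symm
  choose w hw' using hw'
  have hv1 : ∃ k, v k ≠ 0 := by
    by_contra! hh
    exact hv0 (Subtype.ext (funext hh))
  obtain ⟨k, hk⟩ := hv1
  have hform : ∀ i j, A i j = (w k / v k) * v i * v j := by
    intro i j
    have h1 : A k j = A j k := hA.apply j k
    rw [hw' j k, hw' k j] at h1
    rw [hw' j i]
    field_simp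
    linear_combination v i * h1
  refine ⟨w k / v k, v, hform, ?_⟩
  obtain ⟨i, j, hij⟩ := hne
  rw [hform] at hij
  exact ⟨i, left_ne_zero_of_mul hij⟩

lemma quad_rank_one {κ : Type} [Fintype κ] (C : Matrix κ κ ℝ) (a : ℝ) (x v : κ → ℝ)
    (hC : ∀ i j, C i j = a * x i * x j) : v ⬝ᵥ (C *ᵥ v) = a * (∑ i, x i * v i) ^ 2 := by
  simp only [dotProduct, Matrix.mulVec, hC]
  rw [sq, Finset.sum_mul_sum, Finset.mul_sum]
  refine Finset.sum_congr rfl fun i _ => ?_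
  rw [Finset.mul_sum, Finset.mul_sum]
  refine Finset.sum_congr rfl fun j _ => ?_
  ring

lemma quad_formMat {κ μ : Type} [Fintype κ] (π : κ → μ) (f₁ f₂ : κ → ℝ) (a b : ℝ) (x y : μ → ℝ)
    (v : κ → ℝ) : v ⬝ᵥ (formMat π f₁ f₂ a b x y *ᵥ v) =
      a * (∑ i, (f₁ i * x (π i)) * v i) ^ 2 - b * (∑ i, (f₂ i * y (π i)) * v i) ^ 2 := by
  rw [← quad_rank_one (Matrix.of fun i j => a * (f₁ i * x (π i)) * (f₁ j * x (π j))) a _ v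
    (fun _ _ => rfl), ← quad_rank_one (Matrix.of fun i j => b * (f₂ i * y (π i)) * (f₂ j * y (π j))) b _ v
    (fun _ _ => rfl), ← dotProduct_sub, ← Matrix.sub_mulVec]
  rfl

/-- Row indices of the parameter space. -/
abbrev RowIdx (M s : ℕ) : Type := Fin M ⊕ {i : Fin M // s ≤ (i : ℕ)}

def rowPi (M s : ℕ) : RowIdx M s → Fin M := Sum.elim id Subtype.val
def rowF (M s : ℕ) : RowIdx M s → ℝ := Sum.elim (fun _ => 1) (fun _ => 0)
def rowG (M s : ℕ) : RowIdx M s → ℝ := Sum.elim (fun i => if (i : ℕ) < s then 1 else 0) (fun _ => 1)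

/-- The position of the `i`-th row of the second frame. -/
def rowEmb (M s : ℕ) (i : Fin M) : RowIdx M s :=
  if h : s ≤ (i : ℕ) then Sum.inr ⟨i, h⟩ else Sum.inl i

lemma rowEmb_inj (M s : ℕ) : Function.Injective (rowEmb M s) := by
  intro i j h
  unfold rowEmb at h
  split_ifs at h <;> simp_all

lemma rowPi_rowEmb (M s : ℕ) (i : Fin M) : rowPi M s (rowEmb M s i) = i := by
  unfold rowEmb rowPi; split_ifs <;> simp

lemma rowG_rowEmb (M s : ℕ) (i : Fin M) : rowG M s (rowEmb M s i) = 1 := by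
  unfold rowEmb rowG; split_ifs with h
  · simp
  · simp; omega

lemma rowG_zero (M s : ℕ) (k : RowIdx M s) (hk : k ∉ Set.range (rowEmb M s)) : rowG M s k = 0 := by
  rcases k with i | i
  · by_cases h : (i : ℕ) < s
    · exact absurd ⟨i, by simp [rowEmb, h]⟩ hk
    · simp [rowG, h]
  · exact absurd ⟨i.1, by simp [rowEmb, i.2]⟩ hk

lemma sum_rowF (M s : ℕ) (x : Fin M → ℝ) (v : RowIdx M s → ℝ) :
    ∑ k, (rowF M s k * x (rowPi M s k)) * v k = ∑ i, x i * v (Sum.inl i) := by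
  simp [Fintype.sum_sum_type, rowF, rowPi]

lemma sum_rowG (M s : ℕ) (y : Fin M → ℝ) (v : RowIdx M s → ℝ) :
    ∑ k, (rowG M s k * y (rowPi M s k)) * v k = ∑ i, y i * v (rowEmb M s i) := by
  symm
  refine Fintype.sum_of_injective (rowEmb M s) (rowEmb_inj M s) _ _ ?_ ?_
  · intro k hk
    rw [rowG_zero M s k hk]; simp
  · intro i
    rw [rowG_rowEmb, rowPi_rowEmb]; simp

lemma formMat_ne {M s : ℕ} (a b : ℝ) (x y : Fin M → ℝ)
    (h : ∃ i j, a * x i * x j ≠ b * y i * y j) :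
    ∃ i j, formMat (rowPi M s) (rowF M s) (rowG M s) a b x y i j ≠ 0 := by
  by_contra! hcon
  obtain ⟨i, j, hij⟩ := h
  apply hij
  have hc : ∀ k l, a * (rowF M s k * x (rowPi M s k)) * (rowF M s l * x (rowPi M s l)) =
      b * (rowG M s k * y (rowPi M s k)) * (rowG M s l * y (rowPi M s l)) := by
    intro k l
    have := hcon k l
    simp only [formMat, Matrix.of_apply] at this
    linarith
  have hY := hc (rowEmb M s i) (rowEmb M s j)
  have hX := hc (Sum.inl i) (Sum.inl j)
  simp only [rowG_rowEmb, rowPi_rowEmb, one_mul] at hY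
  by_cases hi : s ≤ (i : ℕ)
  · have e1 : rowF M s (rowEmb M s i) = 0 := by simp [rowEmb, hi, rowF]
    have e2 : rowG M s (Sum.inl i) = 0 := by simp [rowG, hi]
    rw [e1] at hY
    rw [e2] at hX
    simp [rowF, rowPi] at hX hY
    grind
  · by_cases hj : s ≤ (j : ℕ)
    · have e1 : rowF M s (rowEmb M s j) = 0 := by simp [rowEmb, hj, rowF]
      have e2 : rowG M s (Sum.inl j) = 0 := by simp [rowG, hj]
      rw [e1] at hY
      rw [e2] at hX
      simp [rowF, rowPi] at hX hY
      grind
    · have e1 : rowEmb M s i = Sum.inl i := by simp [rowEmb, hi]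
      have e2 : rowEmb M s j = Sum.inl j := by simp [rowEmb, hj]
      rw [e1, e2] at hY
      simpa [rowF, rowPi] using hY

lemma card_rowIdx {M s : ℕ} (hs : s ≤ M) : Fintype.card (RowIdx M s) + s = 2 * M := by
  have h1 : Fintype.card {i : Fin M // s ≤ (i : ℕ)} = M - s := by
    rw [Fintype.card_subtype]
    have h2 := Finset.card_filter_add_card_filter_not (s := (Finset.univ : Finset (Fin M)))
      (fun i => (i : ℕ) < s)
    have h3 : (Finset.univ.filter fun i : Fin M => (i : ℕ) < s).card = s := by
      rw [Fin.card_filter_val_lt]; simpa using hs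
    simp only [not_lt, Finset.card_univ, Fintype.card_fin] at h2
    omega
  rw [Fintype.card_sum, h1, Fintype.card_fin]
  omega

lemma overlapping_of_indep {M N : ℕ} [NeZero N] {s : ℕ} (hs : s ≤ M) (c : RowIdx M s → ZMod N → ℝ)
    (hc : LinearIndependent ℝ c) :
    IsSOverlappingPairR s ((fun i n => c (Sum.inl i) n, fun i n => c (rowEmb M s i) n) :
      Matrix (Fin M) (ZMod N) ℝ × Matrix (Fin M) (ZMod N) ℝ) := by
  have hP : LinearIndependent ℝ (fun i => c (Sum.inl i)) := hc.comp _ Sum.inl_injective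
  have hQ : LinearIndependent ℝ (fun i => c (rowEmb M s i)) := hc.comp _ (rowEmb_inj M s)
  refine ⟨?_, ?_, ?_, ?_⟩
  · have := LinearIndependent.rank_matrix (M := (fun i n => c (Sum.inl i) n : Matrix (Fin M) (ZMod N) ℝ)) hP
    simpa using this
  · have := LinearIndependent.rank_matrix (M := (fun i n => c (rowEmb M s i) n : Matrix (Fin M) (ZMod N) ℝ)) hQ
    simpa using this
  · intro i hi
    have : rowEmb M s i = Sum.inl i := by simp [rowEmb, hi]
    simp only [this]
  · have h1 : Module.finrank ℝ (Submodule.span ℝ (Set.range fun i => c (Sum.inl i))) = M := by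
      simpa using finrank_span_eq_card hP
    have h2 : Module.finrank ℝ (Submodule.span ℝ (Set.range fun i => c (rowEmb M s i))) = M := by
      simpa using finrank_span_eq_card hQ
    have h3 := finrank_span_eq_card hc
    have h4 := card_rowIdx hs
    have h5 : Submodule.span ℝ (Set.range fun i => c (Sum.inl i)) ⊔
        Submodule.span ℝ (Set.range fun i => c (rowEmb M s i)) = Submodule.span ℝ (Set.range c) := by
      rw [← Submodule.span_union]
      congr 1
      ext u
      constructor
      · rintro (⟨i, rfl⟩ | ⟨i, rfl⟩) <;> exact ⟨_, rfl⟩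
      · rintro ⟨i | i, rfl⟩
        · exact Or.inl ⟨i, rfl⟩
        · exact Or.inr ⟨i.1, by simp [rowEmb, i.2]⟩
    have h6 := Submodule.finrank_sup_add_finrank_inf_eq
      (Submodule.span ℝ (Set.range fun i => c (Sum.inl i)))
      (Submodule.span ℝ (Set.range fun i => c (rowEmb M s i)))
    rw [h5, h1, h2, h3] at h6
    change Module.finrank ℝ ↥(Submodule.span ℝ (Set.range fun i => c (Sum.inl i)) ⊓
      Submodule.span ℝ (Set.range fun i => c (rowEmb M s i))) = s
    omega

lemma exists_indep_point {κ ν : Type} [Fintype κ] [DecidableEq κ] [Fintype ν]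
    (hcard : Fintype.card κ ≤ Fintype.card ν) (q : MvPolynomial (κ × ν) ℝ) (hq : q ≠ 0) :
    ∃ c : κ × ν → ℝ, MvPolynomial.eval c q ≠ 0 ∧ LinearIndependent ℝ (fun k n => c (k, n)) := by
  classical
  obtain ⟨f⟩ := Function.Embedding.nonempty_of_card_le hcard
  let D : Matrix κ κ (MvPolynomial (κ × ν) ℝ) := Matrix.of fun k l => MvPolynomial.X (k, f l)
  have hD : ∀ c : κ × ν → ℝ, MvPolynomial.eval c D.det =
      (Matrix.of fun k l => c (k, f l)).det := by
    intro c
    rw [RingHom.map_det]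
    congr 1
    ext k l
    simp [D]
  have hD0 : D.det ≠ 0 := by
    intro h0
    have h1 := hD (fun p => if f p.1 = p.2 then 1 else 0)
    have h2 : (Matrix.of fun k l => if f k = f l then (1 : ℝ) else 0) = (1 : Matrix κ κ ℝ) := by
      ext k l
      simp [Matrix.one_apply]
    simp only [h2, h0, map_zero, Matrix.det_one] at h1
    exact zero_ne_one h1
  have hprod : ∃ c, MvPolynomial.eval c (q * D.det) ≠ 0 := by
    by_contra! hh
    exact mul_ne_zero hq hD0 (MvPolynomial.funext fun c => by rw [hh c, map_zero])
  obtain ⟨c, hc⟩ := hprod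
  rw [map_mul] at hc
  refine ⟨c, left_ne_zero_of_mul hc, ?_⟩
  have h1 := right_ne_zero_of_mul hc
  rw [hD] at h1
  have h2 := Matrix.linearIndependent_rows_of_det_ne_zero h1
  exact LinearIndependent.of_comp (LinearMap.funLeft ℝ ℝ f) h2

/-- Embedding of the coordinates of the parameter space. -/
def coordEmb (M N s : ℕ) : RowIdx M s × ZMod N → (Fin M × ZMod N) ⊕ (Fin M × ZMod N) :=
  fun p => Sum.elim (fun i => Sum.inl (i, p.2)) (fun i => Sum.inr (i.1, p.2)) p.1

/-- If N is even and N > 4M−4, then for a generic pair of s-overlapping frames on ℝ^M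
there is no pair of distinct rank-one real symmetric matrices satisfying (★). -/
theorem generic_overlapping_pairs_real (M N Nh s : ℕ) [NeZero N]
    (hN : N = 2 * Nh) (hNh : 0 < Nh) (hs : s ≤ M)
    (h : (N : ℤ) > 4 * (M : ℤ) - 4) :
    ∃ W : Set (Matrix (Fin M) (ZMod N) ℝ × Matrix (Fin M) (ZMod N) ℝ),
      IsZariskiOpenPairR W ∧ (∃ p ∈ W, IsSOverlappingPairR s p) ∧
      ∀ p ∈ W, IsSOverlappingPairR s p →
        ¬ ∃ A B : Matrix (Fin M) (Fin M) ℝ,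
            A.IsSymm ∧ B.IsSymm ∧ A.rank = 1 ∧ B.rank = 1 ∧ A ≠ B ∧
            SatisfiesSystem Nh p.1 p.2 A B := by
  
  subst hN
  have hcast : ∀ k l : ℕ, k ≤ Nh → l ≤ Nh → (k : ZMod (2 * Nh)) = l → k = l := by
    intro k l hk hl hkl
    rw [ZMod.natCast_eq_natCast_iff'] at hkl
    rwa [Nat.mod_eq_of_lt (by omega), Nat.mod_eq_of_lt (by omega)] at hkl
  let H : Finset (ZMod (2 * Nh)) := (Finset.range (Nh + 1)).image (fun k : ℕ => (k : ZMod (2 * Nh)))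
  have hHc : H.card = Nh + 1 := by
    rw [Finset.card_image_of_injOn, Finset.card_range]
    intro k hk l hl hkl
    simp only [Finset.coe_range, Set.mem_Iio] at hk hl
    exact hcast k l (by omega) (by omega) hkl
  let r : ZMod (2 * Nh) → ℝ := fun n => if n = 0 ∨ n = (Nh : ZMod (2 * Nh)) then 0 else 1
  have hr : ∀ n ∈ H, r n = 0 ∨ -n ∉ H := by
    intro n hn
    by_cases h0 : n = 0 ∨ n = (Nh : ZMod (2 * Nh))
    · left; simp only [r, if_pos h0]
    · right
      obtain ⟨k, hk, rfl⟩ := Finset.mem_image.mp hn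
      intro hn'
      obtain ⟨l, hl, hkl⟩ := Finset.mem_image.mp hn'
      have h1 : ((k + l : ℕ) : ZMod (2 * Nh)) = 0 := by push_cast; rw [hkl]; ring
      rw [ZMod.natCast_eq_zero_iff] at h1
      push Not at h0
      have hk0 : k ≠ 0 := by rintro rfl; exact h0.1 (by simp)
      have hk1 : k ≠ Nh := by rintro rfl; exact h0.2 rfl
      have := Nat.le_of_dvd (by omega) h1
      simp only [Finset.mem_range] at hk hl
      omega
  obtain ⟨q, hq0, hq⟩ := poly_exists (rowPi M s) (rowF M s) (rowG M s) H r (fun n => -n) hr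
    (by rw [hHc, Fintype.card_fin]; push_cast at h; omega)
  refine ⟨{p | ∃ q' ∈ ({MvPolynomial.rename (coordEmb M (2 * Nh) s) q} : Set _), MvPolynomial.eval
      (Sum.elim (fun a => p.1 a.1 a.2) (fun a => p.2 a.1 a.2)) q' ≠ 0}, ⟨_, rfl⟩, ?_, ?_⟩
  · have hcard := card_rowIdx hs
    obtain ⟨c, hc, hind⟩ := exists_indep_point (κ := RowIdx M s) (ν := ZMod (2 * Nh))
      (by rw [ZMod.card]; push_cast at h; omega) q hq0
    refine ⟨_, ?_, overlapping_of_indep hs _ hind⟩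
    refine ⟨_, rfl, ?_⟩
    rw [MvPolynomial.eval_rename]
    convert hc using 2
    congr 1
    funext p
    rcases p with ⟨i | i, n⟩
    · simp [coordEmb]
    · simp [coordEmb, rowEmb, i.2]
  · rintro ⟨P, Q⟩ ⟨q', hq', hne⟩ ⟨-, -, hagree, -⟩ ⟨A, B, hA, hB, hA1, hB1, hAB, hsys⟩
    rw [Set.mem_singleton_iff] at hq'
    subst hq'
    apply hne
    rw [MvPolynomial.eval_rename]
    obtain ⟨a, x, hax, ha⟩ := rank_one_form A hA hA1
    obtain ⟨b, y, hby, -⟩ := rank_one_form B hB hB1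
    dsimp only at hagree hsys
    let c : RowIdx M s × ZMod (2 * Nh) → ℝ := (Sum.elim (fun a => P a.1 a.2) (fun a => Q a.1 a.2)) ∘
      coordEmb M (2 * Nh) s
    have hcP : ∀ i n, c (Sum.inl i, n) = P i n := fun i n => rfl
    have hcQ : ∀ i n, c (rowEmb M s i, n) = Q i n := by
      intro i n
      by_cases hi : s ≤ (i : ℕ)
      · simp [rowEmb, hi, c, coordEmb]
      · have : P i n = Q i n := congrFun (hagree i (by omega)) n
        simp [rowEmb, hi, c, coordEmb, this]
    have hform : ∀ n, (fun k => c (k, n)) ⬝ᵥ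
        (formMat (rowPi M s) (rowF M s) (rowG M s) a b x y *ᵥ fun k => c (k, n)) =
        (fun i => P i n) ⬝ᵥ (A *ᵥ fun i => P i n) - (fun i => Q i n) ⬝ᵥ (B *ᵥ fun i => Q i n) := by
      intro n
      rw [quad_formMat, sum_rowF, sum_rowG, quad_rank_one A a x _ hax, quad_rank_one B b y _ hby]
      simp only [hcP, hcQ]
    refine hq ⟨c, a, b, x, y, ha, formMat_ne a b x y ?_, ?_⟩
    · by_contra! hh
      exact hAB (by ext i j; rw [hax, hby, hh])
    · obtain ⟨s0, s1, s2⟩ := hsys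
      intro n hn
      rw [hform, hform]
      by_cases h0 : n = 0
      · have : r n = 0 := by simp only [r, h0, true_or, if_true]
        rw [this, h0, s0]; ring
      · by_cases h1 : n = (Nh : ZMod (2 * Nh))
        · have : r n = 0 := by simp only [r, h1, or_true, if_true]
          rw [this, h1, s1]; ring
        · have hrn : r n = 1 := by simp [r, h0, h1]
          obtain ⟨k, hk, rfl⟩ := Finset.mem_image.mp hn
          have hk0 : k ≠ 0 := by rintro rfl; exact h0 (by simp)
          have hk1 : k ≠ Nh := by rintro rfl; exact h1 rfl
          have := s2 k (by omega) (by simp only [Finset.mem_range] at hk; omega)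
          rw [hrn]
          linear_combination this
end
end
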